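/- arXiv:2505.18712 — 2 statements merged into one kernel-verified Lean document; each statement's English description precedes it below -/
import Mathlib

section
/- Let A > 13 and δ > 0 be fixed and let h ∈ 𝓗(A,δ). Then there exist complex numbers α_1, …, α_{2⌊A⌋−1} and a constant C = C(A,h) such that for all x ∈ (0,4π) one has |H⁺(x) − Σ_{m=1}^{2⌊A⌋−1} α_m x^m| ≤ C·x^{2⌊A⌋}. -/
open MeasureTheory Real Complex

/-- The Bessel function of the first kind `J_ν(x)`, for `x > 0`, defined via its power series,
where `(x/2)^w := exp (w * log (x/2))` with the real logarithm. -/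
noncomputable def besselJ (ν : ℂ) (x : ℝ) : ℂ :=
  ∑' m : ℕ, ((-1) ^ m / ((Nat.factorial m : ℂ) * Complex.Gamma (m + ν + 1))) *
    Complex.exp ((2 * m + ν) * Real.log (x / 2))

/-- The integral transform `H⁺(x) = (2i/π) ∫_ℝ h(t) J_{2it}(x) t / cosh(πt) dt`. -/
noncomputable def Hplus (h : ℝ → ℝ) (x : ℝ) : ℂ :=
  (2 * Complex.I / (π : ℂ)) *
    ∫ t : ℝ, (h t : ℂ) * besselJ (2 * Complex.I * t) x * ((t : ℂ) / (Real.cosh (π * t) : ℂ))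

/-- `h : ℝ → ℝ` belongs to the class `𝓗(A, δ)`, witnessed by the holomorphic extension
`H : ℂ → ℂ` to the strip `{s : |Im s| ≤ A}`. -/
structure IsInHClass (A δ : ℝ) (h : ℝ → ℝ) (H : ℂ → ℂ) : Prop where
  nonneg : ∀ t : ℝ, 0 ≤ h t
  even : ∀ t : ℝ, h (-t) = h t
  not_zero : ∃ t : ℝ, h t ≠ 0
  extends_h : ∀ t : ℝ, H (t : ℂ) = (h t : ℂ)
  even_ext : ∀ s : ℂ, H (-s) = H s
  holo : DifferentiableOn ℂ H {s : ℂ | |s.im| ≤ A}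
  bound : ∃ C : ℝ, ∀ s : ℂ, |s.im| ≤ A → ‖H s‖ ≤ C * (1 + ‖s‖) ^ (-(2 + δ))

lemma norm_beta_le (a b v : ℝ) (ha : 0 < a) (hb : 0 < b) :
    ‖Complex.betaIntegral (a + v * I) b‖ ≤ Real.Gamma a * Real.Gamma b / Real.Gamma (a + b) := by
  have h0 : Complex.betaIntegral (a:ℂ) b = ((∫ x in (0:ℝ)..1, x ^ (a-1) * (1-x)^(b-1) : ℝ) : ℂ) := by
    rw [Complex.betaIntegral, ← intervalIntegral.integral_ofReal]
    apply intervalIntegral.integral_congr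
    intro x hx
    rw [Set.uIcc_of_le zero_le_one] at hx
    simp only
    push_cast
    rw [Complex.ofReal_cpow hx.1, Complex.ofReal_cpow (by linarith [hx.2])]
    push_cast
    rfl
  have h1 := ProbabilityTheory.beta_eq_betaIntegralReal a b ha hb
  rw [h0, Complex.ofReal_re] at h1
  change Real.Gamma a * Real.Gamma b / Real.Gamma (a + b) = _ at h1
  rw [h1, Complex.betaIntegral]
  refine (intervalIntegral.norm_integral_le_integral_norm zero_le_one).trans (le_of_eq ?_)
  apply intervalIntegral.integral_congr_ae
  have : ∀ᵐ x : ℝ, x ≠ 1 := by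
    simp [ae_iff]
  filter_upwards [this] with x hx1 hx
  rw [Set.uIoc_of_le zero_le_one] at hx
  have : x < 1 := lt_of_le_of_ne hx.2 hx1
  have e : (1 - (x:ℂ)) = ((1 - x : ℝ) : ℂ) := by push_cast; rfl
  rw [norm_mul, e, Complex.norm_cpow_eq_rpow_re_of_pos hx.1,
    Complex.norm_cpow_eq_rpow_re_of_pos (by linarith)]
  simp

lemma norm_Gamma_half (v : ℝ) : ‖Complex.Gamma ((1/2 : ℝ) + v * I)‖ ^ 2 = π / Real.cosh (π * v) := by
  have h := Complex.Gamma_mul_Gamma_one_sub ((1/2 : ℝ) + v * I)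
  have e : 1 - (((1/2 : ℝ) : ℂ) + v * I) = (starRingEnd ℂ) ((1/2 : ℝ) + v * I) := by
    rw [map_add, map_mul, Complex.conj_ofReal, Complex.conj_ofReal, Complex.conj_I]
    push_cast; ring
  rw [e, Complex.Gamma_conj, Complex.mul_conj] at h
  have e2 : Complex.sin (π * ((1/2 : ℝ) + v * I)) = (Real.cosh (π * v) : ℝ) := by
    have : (π : ℂ) * ((1/2 : ℝ) + v * I) = (π * v) * I + π / 2 := by push_cast; ring
    rw [this, Complex.sin_add_pi_div_two, Complex.cos_mul_I]
    push_cast; rfl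
  rw [e2, ← Complex.ofReal_div, Complex.ofReal_inj, Complex.normSq_eq_norm_sq] at h
  exact h

lemma Gamma_lower (c v : ℝ) (hc : 1/2 < c) :
    Real.Gamma c ^ 2 ≤ ‖Complex.Gamma (c + v * I)‖ ^ 2 * Real.cosh (π * v) := by
  have h := @Complex.Gamma_mul_Gamma_eq_betaIntegral (((1/2 : ℝ) : ℂ) + v * I) ((c - 1/2 : ℝ) : ℂ)
    (by simp) (by rw [Complex.ofReal_re]; linarith)
  have hb := norm_beta_le (1/2) (c - 1/2) v (by norm_num) (by linarith)
  have e : (((1/2 : ℝ) : ℂ) + v * I) + ((c - 1/2 : ℝ) : ℂ) = c + v * I := by push_cast; ring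
  rw [e] at h
  have h2 := congrArg norm h
  rw [norm_mul, norm_mul, Complex.Gamma_ofReal, Complex.norm_real,
    Real.norm_of_nonneg (Real.Gamma_pos_of_pos (by linarith : 0 < c - 1/2)).le] at h2
  have hG := Real.Gamma_pos_of_pos (by linarith : 0 < c - 1/2)
  have hGc := Real.Gamma_pos_of_pos (by linarith : 0 < c)
  have hh : (1/2 : ℝ) + (c - 1/2) = c := by ring
  rw [hh] at hb
  have h3 := mul_le_mul_of_nonneg_left hb (norm_nonneg (Complex.Gamma (c + v * I)))
  rw [← h2, Real.Gamma_one_half_eq] at h3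
  have h4 : ‖Complex.Gamma ((1/2 : ℝ) + v * I)‖ * Real.Gamma c
      ≤ ‖Complex.Gamma (c + v * I)‖ * √π := by
    have : ‖Complex.Gamma (c + v * I)‖ * (√π * Real.Gamma (c - 1/2) / Real.Gamma c) =
      (‖Complex.Gamma (c + v * I)‖ * √π / Real.Gamma c) * Real.Gamma (c - 1/2) := by ring
    rw [this] at h3
    have := le_of_mul_le_mul_right h3 hG
    rwa [le_div_iff₀ hGc] at this
  have h5 := pow_le_pow_left₀ (by positivity) h4 2
  rw [mul_pow, mul_pow, norm_Gamma_half, Real.sq_sqrt Real.pi_pos.le, div_mul_eq_mul_div,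
    div_le_iff₀ (Real.cosh_pos _)] at h5
  have := Real.pi_pos
  nlinarith

/-- The key bound for the reciprocal Gamma function. -/
lemma inv_Gamma_bound (c u : ℝ) (hc : 1/2 < c) :
    ‖(Complex.Gamma (c + (2 * u : ℝ) * I))⁻¹‖ ≤ 2 * Real.cosh (π * u) / Real.Gamma c := by
  have h := Gamma_lower c (2 * u) hc
  have hGc := Real.Gamma_pos_of_pos (by linarith : 0 < c)
  have hch := Real.cosh_pos (π * u)
  have e : Real.cosh (π * (2 * u)) ≤ 2 * Real.cosh (π * u) ^ 2 := by
    rw [show π * (2 * u) = 2 * (π * u) by ring, Real.cosh_two_mul, Real.sinh_sq]; linarith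
  set G := ‖Complex.Gamma (c + (2 * u : ℝ) * I)‖ with hG
  have h2 : Real.Gamma c ^ 2 ≤ (G * (2 * Real.cosh (π * u))) ^ 2 := by
    refine h.trans ((mul_le_mul_of_nonneg_left e (sq_nonneg G)).trans ?_)
    nlinarith [mul_nonneg (sq_nonneg G) (sq_nonneg (Real.cosh (π * u)))]
  have h3 : Real.Gamma c ≤ G * (2 * Real.cosh (π * u)) :=
    le_of_sq_le_sq h2 (by positivity) 
  have hGp : 0 < G := by
    rcases (norm_nonneg (Complex.Gamma (c + (2 * u : ℝ) * I))).lt_or_eq with h | h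
    · exact h
    · rw [hG, ← h] at h3; linarith
  rw [norm_inv, ← hG, inv_eq_one_div, div_le_div_iff₀ hGp hGc]
  linarith

lemma cosh_lower (x : ℝ) : 1 + x ^ 2 / 2 ≤ Real.cosh x := by
  have h : Real.cosh x = 1 + 2 * Real.sinh (x / 2) ^ 2 := by
    have := Real.cosh_two_mul (x / 2)
    rw [Real.cosh_sq, show 2 * (x / 2) = x by ring] at this
    linarith
  have h2 : (x / 2) ^ 2 ≤ Real.sinh (x / 2) ^ 2 := by
    rw [sq_le_sq, Real.abs_sinh]
    exact Real.self_le_sinh_iff.2 (abs_nonneg _)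
  rw [h]; nlinarith

lemma integrable_inv_cosh : Integrable (fun u : ℝ => ((Real.cosh (π * u) : ℝ) : ℂ)⁻¹) := by
  refine (integrable_inv_one_add_sq).mono' ?_ ?_
  · apply Continuous.aestronglyMeasurable
    apply Continuous.inv₀
    · fun_prop
    · intro x; exact_mod_cast (Real.cosh_pos _).ne'
  · filter_upwards with u
    rw [norm_inv, Complex.norm_real, Real.norm_of_nonneg (Real.cosh_pos _).le]
    apply inv_anti₀ (by positivity)
    refine le_trans ?_ (cosh_lower _)
    have : (9:ℝ) ≤ π ^ 2 := by nlinarith [Real.pi_gt_three]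
    nlinarith [sq_nonneg u]

lemma cosh_im (s : ℂ) : Complex.cosh (π * s) =
    ((Real.cosh (π * s.re) * Real.cos (π * s.im) : ℝ) : ℂ)
      + ((Real.sinh (π * s.re) * Real.sin (π * s.im) : ℝ) : ℂ) * I := by
  conv_lhs => rw [← Complex.re_add_im s, mul_add, ← mul_assoc, Complex.cosh_add, Complex.cosh_mul_I,
    Complex.sinh_mul_I]
  push_cast; ring

lemma norm_cosh_ge (s : ℂ) : |Real.sinh (π * s.re)| ≤ ‖Complex.cosh (π * s)‖ := by
  refine abs_le_of_sq_le_sq ?_ (norm_nonneg _)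
  rw [cosh_im, ← Complex.normSq_eq_norm_sq, Complex.normSq_add_mul_I, mul_pow, mul_pow,
    Real.cosh_sq]
  nlinarith [Real.sin_sq_add_cos_sq (π * s.im), sq_nonneg (Real.cos (π * s.im))]

lemma half_cosh_le_sinh (R : ℝ) (hR : 1 ≤ R) : Real.cosh (π * R) / 2 ≤ Real.sinh (π * R) := by
  have h1 := Real.cosh_sub_sinh (π * R)
  have h2 : Real.exp (-(π * R)) ≤ 1 / 2 := by
    have h3 : Real.exp (-(π * R)) ≤ Real.exp (-1) := by
      apply Real.exp_le_exp.2
      nlinarith [Real.pi_gt_three]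
    have h4 := Real.exp_neg_one_lt_half
    linarith
  have := Real.one_le_cosh (π * R)
  linarith

lemma cosh_ne_zero_strip (s : ℂ) (h1 : -1 ≤ s.im) (h2 : s.im ≤ 0) (hs : s ≠ -I / 2) :
    Complex.cosh (π * s) ≠ 0 := by
  intro h
  rw [cosh_im] at h
  have hre := congrArg Complex.re h
  have him := congrArg Complex.im h
  simp only [Complex.add_re, Complex.ofReal_re, Complex.mul_re, Complex.I_re, Complex.ofReal_im,
    Complex.I_im, Complex.zero_re, Complex.add_im, Complex.mul_im, Complex.zero_im] at hre him
  have hc : Real.cos (π * s.im) = 0 := by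
    have : Real.cosh (π * s.re) * Real.cos (π * s.im) = 0 := by linarith
    exact (mul_eq_zero.1 this).resolve_left (Real.cosh_pos _).ne'
  have hsin : Real.sin (π * s.im) ≠ 0 := by
    intro h0
    have := Real.sin_sq_add_cos_sq (π * s.im)
    rw [hc, h0] at this; norm_num at this
  have hsh : Real.sinh (π * s.re) = 0 := by
    have : Real.sinh (π * s.re) * Real.sin (π * s.im) = 0 := by linarith
    exact (mul_eq_zero.1 this).resolve_right hsin
  have hre0 : s.re = 0 := by
    have := Real.sinh_eq_zero.1 hsh
    exact (mul_eq_zero.1 this).resolve_left Real.pi_pos.ne'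
  have him0 : s.im = -1/2 := by
    have hpi := Real.pi_pos
    rcases lt_trichotomy s.im (-1/2) with hlt | heq | hgt
    · exfalso
      have : 0 < Real.cos (π * s.im + π + 0) → False := fun hp => by
        rw [add_zero, Real.cos_add_pi, hc] at hp; simp at hp
      apply this
      apply Real.cos_pos_of_mem_Ioo
      constructor <;> nlinarith
    · exact heq
    · exfalso
      have : 0 < Real.cos (π * s.im) := by
        apply Real.cos_pos_of_mem_Ioo
        constructor <;> nlinarith
      linarith
  apply hs
  apply Complex.ext
  · simp [hre0]
  · simp [him0]

/-- Single step of the contour shift, over a strip containing one pole of `1 / cosh (π s)`. -/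
lemma one_step (f : ℂ → ℂ) (δ B : ℝ) (hδ : 0 < δ)
    (hf : DifferentiableOn ℂ f {s : ℂ | -1 ≤ s.im ∧ s.im ≤ 0})
    (hb : ∀ s : ℂ, -1 ≤ s.im → s.im ≤ 0 →
      ‖f s‖ ≤ B * Real.cosh (π * s.re) * (1 + |s.re|) ^ (-(1 + δ))) :
    (∫ u : ℝ, f u / (Real.cosh (π * u) : ℝ)) + (∫ u : ℝ, f (u - I) / (Real.cosh (π * u) : ℝ))
      = f (-I / 2) * (2 * ∫ u : ℝ, ((Real.cosh (π * u) : ℝ) : ℂ)⁻¹) := by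
  set S : Set ℂ := {s : ℂ | -1 ≤ s.im ∧ s.im ≤ 0} with hS
  set p : ℂ := -I / 2 with hp
  set Cf : ℂ → ℂ := fun s => Complex.cosh (π * s) with hCf
  have hpim : p.im = -1/2 := by simp [hp]
  have hpre : p.re = 0 := by simp [hp]
  have hSp : S ∈ nhds p := by
    have : {s : ℂ | -1 < s.im ∧ s.im < 0} ∈ nhds p := by
      apply IsOpen.mem_nhds
      · exact (isOpen_lt continuous_const Complex.continuous_im).inter
          (isOpen_lt Complex.continuous_im continuous_const)
      · constructor <;> rw [hpim] <;> norm_num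
    filter_upwards [this] with s hs
    exact ⟨hs.1.le, hs.2.le⟩
  have hCp : Cf p = 0 := by
    simp only [hCf]
    rw [cosh_im, hpim, hpre]
    have : Real.cos (π * (-1/2)) = 0 := by
      rw [show π * (-1/2) = -(π/2) by ring, Real.cos_neg, Real.cos_pi_div_two]
    simp [this]
  have hCd : Differentiable ℂ Cf := by
    intro s; simp only [hCf]; fun_prop
  have hCderiv : deriv Cf p ≠ 0 := by
    have h1 : HasDerivAt Cf (Complex.sinh (π * p) * (π * 1)) p :=
      ((hasDerivAt_id p).const_mul (π : ℂ)).ccosh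
    rw [h1.deriv]
    have h2 := Complex.cosh_sq (π * p)
    have h3 : Complex.cosh (π * p) = 0 := hCp
    rw [h3] at h2
    have h4 : Complex.sinh (π * p) ≠ 0 := by
      intro h; rw [h] at h2; norm_num at h2
    have : (π : ℂ) ≠ 0 := by exact_mod_cast Real.pi_pos.ne'
    simp [h4, this]
  have hCne : ∀ s ∈ S, s ≠ p → Cf s ≠ 0 := fun s hs hsp => cosh_ne_zero_strip s hs.1 hs.2 hsp
  have hDne : ∀ s ∈ S, dslope Cf p s ≠ 0 := by
    intro s hs
    by_cases hsp : s = p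
    · rw [hsp, dslope_same]; exact hCderiv
    · have := sub_smul_dslope Cf p s
      rw [hCp, sub_zero] at this
      intro h
      rw [h, smul_zero] at this
      exact hCne s hs hsp this.symm
  set q : ℂ → ℂ := fun s => dslope f p s / dslope Cf p s with hq
  have hqd : DifferentiableOn ℂ q S :=
    ((Complex.differentiableOn_dslope hSp).2 hf).div
      ((Complex.differentiableOn_dslope hSp).2 hCd.differentiableOn) hDne
  have hqe : ∀ s ∈ S, s ≠ p → q s = (f s - f p) / Cf s := by
    intro s hs hsp
    have h1 := sub_smul_dslope Cf p s
    have h2 := sub_smul_dslope f p s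
    rw [hCp, sub_zero] at h1
    rw [← h1, ← h2]
    have : s - p ≠ 0 := sub_ne_zero.2 hsp
    simp only [hq, smul_eq_mul]
    rw [mul_div_mul_left _ _ this]
  have htop : ∀ u : ℝ, q u = (f u - f p) / (Real.cosh (π * u) : ℝ) := by
    intro u
    rw [hqe _ ⟨by simp, by simp⟩ (by
      intro h; have := congrArg Complex.im h; rw [hpim] at this; simp at this; norm_num at this)]
    simp [hCf]
  have hcI : ∀ u : ℝ, Complex.cosh (π * (u - I)) = - (Real.cosh (π * u) : ℝ) := by
    intro u
    rw [cosh_im]; simp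
  have hbot : ∀ u : ℝ, q (u - I) = - ((f (u - I) - f p) / (Real.cosh (π * u) : ℝ)) := by
    intro u
    rw [hqe _ ⟨by simp, by simp⟩ (by
      intro h; have := congrArg Complex.im h; rw [hpim] at this; simp at this; norm_num at this)]
    simp only [hCf]
    rw [hcI, div_neg]
  have hB : 0 ≤ B := by
    have := (norm_nonneg _).trans (hb 0 (by simp) (by simp))
    simpa using this
  -- integrability
  have hint : ∀ v : ℂ, v.re = 0 → -1 ≤ v.im → v.im ≤ 0 →
      Integrable (fun u : ℝ => f (u + v) / (Real.cosh (π * u) : ℝ)) := by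
    intro v hv0 hv1 hv2
    have hI : Integrable (fun u : ℝ => B * (1 + ‖u‖) ^ (-(1 + δ))) :=
      (integrable_one_add_norm (by simp; exact hδ)).const_mul B
    refine hI.mono' ?_ ?_
    · apply Continuous.aestronglyMeasurable
      apply Continuous.div
      · exact hf.continuousOn.comp_continuous (by fun_prop) (fun u => by simp [hS, hv1, hv2])
      · fun_prop
      · intro x; exact_mod_cast (Real.cosh_pos _).ne'
    · filter_upwards with u
      have hc := Real.cosh_pos (π * u)
      rw [norm_div, Complex.norm_real, Real.norm_of_nonneg hc.le, div_le_iff₀ hc]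
      refine (hb _ (by simpa using hv1) (by simpa using hv2)).trans (le_of_eq ?_)
      simp only [Complex.add_re, Complex.ofReal_re, hv0, add_zero, Real.norm_eq_abs]
      ring
  have hint0 : Integrable (fun u : ℝ => f u / (Real.cosh (π * u) : ℝ)) := by
    simpa using hint 0 (by simp) (by simp) (by simp)
  have hint1 : Integrable (fun u : ℝ => f (u - I) / (Real.cosh (π * u) : ℝ)) := by
    simpa [sub_eq_add_neg] using hint (-I) (by simp) (by simp) (by simp)
  have hcI2 := integrable_inv_cosh
  have hq0 : Integrable (fun u : ℝ => q u) := by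
    have := hint0.sub (hcI2.const_mul (f p))
    refine this.congr ?_
    filter_upwards with u
    rw [htop]; simp only [Pi.sub_apply]; ring
  have hq1 : Integrable (fun u : ℝ => q (u - I)) := by
    have := (hint1.sub (hcI2.const_mul (f p))).neg
    refine this.congr ?_
    filter_upwards with u
    rw [hbot]; simp only [Pi.sub_apply, Pi.neg_apply]; ring
  -- vertical bound
  set E : ℝ → ℝ := fun R => 2 * B * (1 + R) ^ (-(1 + δ)) + 2 * ‖f p‖ * (Real.cosh (π * R))⁻¹ with hE
  have hE0 : Filter.Tendsto E Filter.atTop (nhds 0) := by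
    have h1 : Filter.Tendsto (fun R : ℝ => (1 + R) ^ (-(1 + δ))) Filter.atTop (nhds 0) :=
      (tendsto_rpow_neg_atTop (by linarith)).comp
        (Filter.tendsto_atTop_add_const_left _ _ Filter.tendsto_id)
    have h2 : Filter.Tendsto (fun R : ℝ => (Real.cosh (π * R))⁻¹) Filter.atTop (nhds 0) := by
      apply Filter.Tendsto.inv_tendsto_atTop
      refine Filter.tendsto_atTop_mono' _ ?_ Filter.tendsto_id
      filter_upwards [Filter.eventually_ge_atTop (0:ℝ)] with R hR
      have := cosh_lower (π * R)
      have : R ≤ π * R := by nlinarith [Real.pi_gt_three]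
      simp only [id]
      nlinarith [sq_nonneg (π * R - 1)]
    have h3 := (h1.const_mul (2 * B)).add (h2.const_mul (2 * ‖f p‖))
    rw [mul_zero, mul_zero, add_zero] at h3
    exact h3
  have hvert : ∀ R : ℝ, 1 ≤ R → ∀ r : ℝ, |r| = R → ∀ y ∈ Set.uIoc (-1:ℝ) 0,
      ‖q (r + y * I)‖ ≤ E R := by
    intro R hR r hr y hy
    rw [Set.uIoc_of_le (by norm_num)] at hy
    have hre : ((r : ℂ) + y * I).re = r := by simp
    have him : ((r : ℂ) + y * I).im = y := by simp
    have hm : ((r : ℂ) + y * I) ∈ S := ⟨by rw [him]; exact hy.1.le, by rw [him]; exact hy.2⟩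
    have hne : ((r : ℂ) + y * I) ≠ p := by
      intro h
      rw [h, hpre] at hre
      rw [← hre] at hr; simp at hr; linarith
    rw [hqe _ hm hne, norm_div]
    have hcr : Real.cosh (π * r) = Real.cosh (π * R) := by
      rw [← Real.cosh_abs (π * r), abs_mul, hr, abs_of_pos Real.pi_pos]
    have hlow : Real.cosh (π * R) / 2 ≤ ‖Cf (r + y * I)‖ := by
      refine (half_cosh_le_sinh R hR).trans (le_trans (le_of_eq ?_) (norm_cosh_ge _))
      rw [hre, Real.abs_sinh, abs_mul, hr, abs_of_pos Real.pi_pos]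
    have hc := Real.cosh_pos (π * R)
    rw [div_le_iff₀ (by linarith)]
    have hup := hb _ hm.1 hm.2
    rw [hre, hr, hcr] at hup
    have hE' : E R * (Real.cosh (π * R) / 2) =
        B * Real.cosh (π * R) * (1 + R) ^ (-(1 + δ)) + ‖f p‖ := by
      simp only [hE]; field_simp
    have hEn : 0 ≤ E R := by
      simp only [hE]
      have : 0 ≤ (1 + R) ^ (-(1 + δ)) := Real.rpow_nonneg (by linarith) _
      positivity
    calc ‖f (r + y * I) - f p‖ ≤ ‖f (r + y * I)‖ + ‖f p‖ := norm_sub_le _ _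
      _ ≤ E R * (Real.cosh (π * R) / 2) := by rw [hE']; linarith
      _ ≤ _ := mul_le_mul_of_nonneg_left hlow hEn
  have hrect : ∀ R : ℝ, 1 ≤ R →
      ‖(∫ u in (-R)..R, q (u - I)) - ∫ u in (-R)..R, q u‖ ≤ 2 * E R := by
    intro R hR
    have h := Complex.integral_boundary_rect_eq_zero_of_differentiableOn q (-R - I) R (by
      apply hqd.mono
      intro s hs
      have := hs.2
      simp at this
      exact ⟨this.1, this.2⟩)
    simp only [Complex.sub_re, Complex.neg_re, Complex.ofReal_re, Complex.I_re, sub_zero,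
      Complex.sub_im, Complex.neg_im, Complex.ofReal_im, Complex.I_im, neg_zero, zero_sub,
      Complex.ofReal_neg, Complex.ofReal_one, Complex.ofReal_zero, zero_mul, add_zero, neg_mul,
      one_mul, ← sub_eq_add_neg] at h
    have v1 := intervalIntegral.norm_integral_le_of_norm_le_const (a := -1) (b := 0)
      (hvert R hR R (abs_of_nonneg (by linarith)))
    have v2 := intervalIntegral.norm_integral_le_of_norm_le_const (a := -1) (b := 0)
      (hvert R hR (-R) (by rw [abs_neg]; exact abs_of_nonneg (by linarith)))
    simp only [Complex.ofReal_neg, zero_sub, neg_neg, abs_one, mul_one] at v1 v2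
    have h' : (∫ u in (-R)..R, q (u - I)) - (∫ u in (-R)..R, q u) =
       I • (∫ (y : ℝ) in (-1)..0, q (-R + y * I)) - I • (∫ (y : ℝ) in (-1)..0, q (R + y * I)) := by
      linear_combination h
    rw [h']
    refine (norm_sub_le _ _).trans ?_
    rw [norm_smul, norm_smul, Complex.norm_I]
    linarith
  have hlim := (intervalIntegral_tendsto_integral hq1 Filter.tendsto_neg_atTop_atBot
    Filter.tendsto_id).sub
    (intervalIntegral_tendsto_integral hq0 Filter.tendsto_neg_atTop_atBot Filter.tendsto_id)
  have hlim0 : Filter.Tendsto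
      (fun R : ℝ => (∫ u in (-R)..R, q (u - I)) - ∫ u in (-R)..R, q u) Filter.atTop (nhds 0) := by
    apply squeeze_zero_norm' (a := fun R => 2 * E R)
    · filter_upwards [Filter.eventually_ge_atTop (1:ℝ)] with R hR using hrect R hR
    · simpa using hE0.const_mul 2
  have hz := tendsto_nhds_unique hlim hlim0
  have e0 : (∫ u : ℝ, q u) = (∫ u : ℝ, f u / (Real.cosh (π * u) : ℝ))
      - f p * ∫ u : ℝ, ((Real.cosh (π * u) : ℝ) : ℂ)⁻¹ := by
    rw [← integral_const_mul, ← integral_sub hint0 (hcI2.const_mul _)]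
    congr 1; ext u; rw [htop]; ring
  have e1 : (∫ u : ℝ, q (u - I)) = -((∫ u : ℝ, f (u - I) / (Real.cosh (π * u) : ℝ))
      - f p * ∫ u : ℝ, ((Real.cosh (π * u) : ℝ) : ℂ)⁻¹) := by
    rw [← integral_const_mul, ← integral_sub hint1 (hcI2.const_mul _), ← integral_neg]
    congr 1; ext u; rw [hbot]; ring
  rw [e0, e1] at hz
  linear_combination -hz

/-- Iterated contour shift. -/
lemma multi_step (g : ℂ → ℂ) (M : ℕ) (δ B : ℝ) (hδ : 0 < δ)
    (hg : DifferentiableOn ℂ g {s : ℂ | -(M:ℝ) ≤ s.im ∧ s.im ≤ 0})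
    (hb : ∀ s : ℂ, -(M:ℝ) ≤ s.im → s.im ≤ 0 →
      ‖g s‖ ≤ B * Real.cosh (π * s.re) * (1 + |s.re|) ^ (-(1 + δ))) :
    ∃ (c : ℕ → ℂ) (C : ℝ), ∀ y : ℝ, 0 < y →
      ‖(∫ u : ℝ, g u * Complex.exp (2 * I * u * Real.log y) / (Real.cosh (π * u) : ℝ))
        - ∑ j ∈ Finset.range M, c j * (y : ℂ) ^ (2 * j + 1)‖ ≤ C * y ^ (2 * M) := by
  set κ : ℂ := 2 * ∫ u : ℝ, ((Real.cosh (π * u) : ℝ) : ℂ)⁻¹ with hκ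
  refine ⟨fun j => (-1) ^ j * (g (-I / 2 - j * I) * κ),
    ∫ u : ℝ, B * (1 + ‖u‖) ^ (-(1 + δ)), fun y hy => ?_⟩
  set G : ℂ → ℂ := fun s => g s * Complex.exp (2 * I * s * Real.log y) with hG
  set J : ℕ → ℂ := fun j => ∫ u : ℝ, G (u - j * I) / (Real.cosh (π * u) : ℝ) with hJ
  have hB : 0 ≤ B := by
    have := (norm_nonneg _).trans (hb 0 (by simp) (by simp))
    simpa using this
  have hexp : ∀ s : ℂ, ‖Complex.exp (2 * I * s * Real.log y)‖ = Real.exp (-(2 * s.im) * Real.log y) := by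
    intro s
    rw [Complex.norm_exp]
    congr 1
    simp
  have hstep : ∀ j < M, J j + J (j + 1) = G (-I / 2 - j * I) * κ := by
    intro j hj
    have hjM : (j : ℝ) + 1 ≤ M := by exact_mod_cast hj
    have hmap : ∀ s : ℂ, -1 ≤ s.im → s.im ≤ 0 →
        -(M:ℝ) ≤ (s - j * I).im ∧ (s - j * I).im ≤ 0 := by
      intro s h1 h2
      have : (s - j * I).im = s.im - j := by simp
      rw [this]
      have : (0:ℝ) ≤ j := Nat.cast_nonneg j
      constructor <;> linarith
    have h := one_step (fun s => G (s - j * I)) δ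
      (B * Real.exp (2 * M * |Real.log y|)) hδ ?_ ?_
    · simp only [hJ]
      rw [← h]
      congr 1
      congr 1; ext u
      push_cast
      congr 2; ring
    · have hGd : DifferentiableOn ℂ G {s : ℂ | -(M:ℝ) ≤ s.im ∧ s.im ≤ 0} := by
        apply hg.mul
        fun_prop
      exact hGd.comp (by fun_prop) (fun s hs => hmap s hs.1 hs.2)
    · intro s h1 h2
      obtain ⟨k1, k2⟩ := hmap s h1 h2
      have hre : (s - j * I).re = s.re := by simp
      have h3 := hb _ k1 k2
      simp only [hG]
      rw [norm_mul, hexp]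
      rw [hre] at h3
      have h4 : Real.exp (-(2 * (s - j * I).im) * Real.log y) ≤ Real.exp (2 * M * |Real.log y|) := by
        apply Real.exp_le_exp.2
        have a1 := le_abs_self (Real.log y)
        have a2 := abs_nonneg (Real.log y)
        have b1 : 0 ≤ -(2 * (s - j * I).im) := by linarith
        calc -(2 * (s - j * I).im) * Real.log y ≤ -(2 * (s - j * I).im) * |Real.log y| :=
              mul_le_mul_of_nonneg_left a1 b1
          _ ≤ _ := mul_le_mul_of_nonneg_right (by linarith) a2
      calc _ ≤ (B * Real.cosh (π * s.re) * (1 + |s.re|) ^ (-(1 + δ))) * Real.exp (2 * M * |Real.log y|) :=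
            mul_le_mul h3 h4 (Real.exp_pos _).le ((norm_nonneg _).trans h3)
        _ = _ := by ring
  have hind : ∀ n ≤ M, J 0 = ∑ j ∈ Finset.range n, (-1) ^ j * (G (-I / 2 - j * I) * κ)
      + (-1) ^ n * J n := by
    intro n
    induction n with
    | zero => intro _; simp
    | succ n ih =>
      intro hn
      rw [ih (by omega), Finset.sum_range_succ, ← hstep n (by omega), pow_succ]
      ring
  have hGp : ∀ j : ℕ, G (-I / 2 - j * I) = g (-I / 2 - j * I) * (y : ℂ) ^ (2 * j + 1) := by
    intro j
    simp only [hG]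
    congr 1
    have : 2 * I * (-I / 2 - j * I) * (Real.log y : ℂ) = ((2 * j + 1 : ℕ) : ℂ) * (Real.log y : ℂ) := by
      push_cast
      linear_combination (-(1 + 2 * j) * (Real.log y : ℂ)) * Complex.I_sq
    rw [this, Complex.exp_nat_mul, ← Complex.ofReal_exp, Real.exp_log hy]
  have hJ0 : (∫ u : ℝ, g u * Complex.exp (2 * I * u * Real.log y) / (Real.cosh (π * u) : ℝ)) = J 0 := by
    simp only [hJ, hG]
    simp
  rw [hJ0, hind M le_rfl]
  have hsum : ∑ j ∈ Finset.range M, (-1) ^ j * (G (-I / 2 - j * I) * κ) =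
      ∑ j ∈ Finset.range M, (-1) ^ j * (g (-I / 2 - j * I) * κ) * (y : ℂ) ^ (2 * j + 1) := by
    apply Finset.sum_congr rfl
    intro j _
    rw [hGp]; ring
  rw [hsum, add_sub_cancel_left, norm_mul, norm_pow, norm_neg, norm_one, one_pow, one_mul]
  simp only [hJ]
  rw [← integral_mul_const]
  have hI : Integrable (fun u : ℝ => B * (1 + ‖u‖) ^ (-(1 + δ)) * y ^ (2 * M)) :=
    ((integrable_one_add_norm (by simp; exact hδ)).const_mul B).mul_const _
  apply norm_integral_le_of_norm_le hI
  filter_upwards with u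
  have hc := Real.cosh_pos (π * u)
  have him : ((u : ℂ) - M * I).im = -M := by simp
  have hre : ((u : ℂ) - M * I).re = u := by simp
  rw [norm_div, Complex.norm_real, Real.norm_of_nonneg hc.le, div_le_iff₀ hc]
  simp only [hG]
  have h3 := hb (u - M * I) (by rw [him]) (by rw [him]; simp)
  rw [norm_mul, hexp, him]
  rw [hre] at h3
  have : Real.exp (-(2 * -(M:ℝ)) * Real.log y) = y ^ (2 * M) := by
    rw [show -(2 * -(M:ℝ)) * Real.log y = ((2 * M : ℕ) : ℝ) * Real.log y by push_cast; ring,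
      Real.exp_nat_mul, Real.exp_log hy]
  rw [this]
  calc _ ≤ B * Real.cosh (π * u) * (1 + |u|) ^ (-(1 + δ)) * y ^ (2 * M) :=
        mul_le_mul_of_nonneg_right h3 (by positivity)
    _ = _ := by rw [Real.norm_eq_abs]; ring

/-- `F` has an expansion of the required kind. -/
def GoodE (N : ℕ) (F : ℝ → ℂ) : Prop :=
  ∃ (α : ℕ → ℂ) (C : ℝ), ∀ x ∈ Set.Ioo (0 : ℝ) (4 * π),
      ‖F x - ∑ m ∈ Finset.Icc 1 (2 * N - 1), α m * (x : ℂ) ^ m‖ ≤ C * x ^ (2 * N)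

lemma GoodE.add {N : ℕ} {F G : ℝ → ℂ} (hF : GoodE N F) (hG : GoodE N G) :
    GoodE N (fun x => F x + G x) := by
  obtain ⟨α, C, h⟩ := hF
  obtain ⟨β, D, k⟩ := hG
  refine ⟨fun m => α m + β m, C + D, fun x hx => ?_⟩
  have e : F x + G x - ∑ m ∈ Finset.Icc 1 (2 * N - 1), (α m + β m) * (x : ℂ) ^ m =
      (F x - ∑ m ∈ Finset.Icc 1 (2 * N - 1), α m * (x : ℂ) ^ m) +
      (G x - ∑ m ∈ Finset.Icc 1 (2 * N - 1), β m * (x : ℂ) ^ m) := by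
    simp only [add_mul, Finset.sum_add_distrib]; ring
  rw [e, add_mul]
  exact (norm_add_le _ _).trans (add_le_add (h x hx) (k x hx))

lemma GoodE.const_mul {N : ℕ} {F : ℝ → ℂ} (hF : GoodE N F) (c : ℂ) :
    GoodE N (fun x => c * F x) := by
  obtain ⟨α, C, h⟩ := hF
  refine ⟨fun m => c * α m, ‖c‖ * C, fun x hx => ?_⟩
  have e : c * F x - ∑ m ∈ Finset.Icc 1 (2 * N - 1), (c * α m) * (x : ℂ) ^ m =
      c * (F x - ∑ m ∈ Finset.Icc 1 (2 * N - 1), α m * (x : ℂ) ^ m) := by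
    simp only [mul_sub, Finset.mul_sum, mul_assoc]
  rw [e, norm_mul, mul_assoc]
  exact mul_le_mul_of_nonneg_left (h x hx) (norm_nonneg _)

lemma GoodE.of_bound {N : ℕ} {F : ℝ → ℂ} (C : ℝ)
    (h : ∀ x ∈ Set.Ioo (0 : ℝ) (4 * π), ‖F x‖ ≤ C * x ^ (2 * N)) : GoodE N F :=
  ⟨fun _ => 0, C, fun x hx => by simpa using h x hx⟩

lemma GoodE.sum {N : ℕ} {F : ℕ → ℝ → ℂ} (n : ℕ) (h : ∀ j < n, GoodE N (F j)) :
    GoodE N (fun x => ∑ j ∈ Finset.range n, F j x) := by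
  induction n with
  | zero => exact GoodE.of_bound 0 (by simp)
  | succ n ih =>
    simp only [Finset.sum_range_succ]
    exact (ih (fun j hj => h j (by omega))).add (h n (by omega))

lemma GoodE.monomial {N : ℕ} (n : ℕ) (h1 : 1 ≤ n) (h2 : n ≤ 2 * N - 1) :
    GoodE N (fun x => (x : ℂ) ^ n) := by
  refine ⟨fun m => if m = n then 1 else 0, 0, fun x _ => ?_⟩
  simp [Finset.sum_ite_eq', h1, h2]

lemma GoodE.congr {N : ℕ} {F G : ℝ → ℂ} (hF : GoodE N F)
    (h : ∀ x ∈ Set.Ioo (0 : ℝ) (4 * π), G x = F x) : GoodE N G := by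
  obtain ⟨α, C, k⟩ := hF
  exact ⟨α, C, fun x hx => by rw [h x hx]; exact k x hx⟩

/-- The function whose contour is shifted. -/
noncomputable def gfun (H : ℂ → ℂ) (m : ℕ) (s : ℂ) : ℂ :=
  H s * s * (Complex.Gamma (m + 2 * I * s + 1))⁻¹

lemma gfun_bound {A δ : ℝ} {h : ℝ → ℝ} {H : ℂ → ℂ} (hδ : 0 < δ) (hh : IsInHClass A δ h H) :
    ∃ K : ℝ, 0 ≤ K ∧ ∀ (m : ℕ) (s : ℂ), -A ≤ s.im → s.im ≤ 0 →
      ‖gfun H m s‖ ≤ K / Real.Gamma (m + 1 - 2 * s.im) * Real.cosh (π * s.re)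
        * (1 + |s.re|) ^ (-(1 + δ)) := by
  obtain ⟨C, hC⟩ := hh.bound
  refine ⟨2 * |C|, by positivity, fun m s h1 h2 => ?_⟩
  have hHs := hC s (abs_le.2 ⟨h1, by linarith⟩)
  have hs0 : 0 < 1 + ‖s‖ := by positivity
  have hm : (0:ℝ) ≤ m := Nat.cast_nonneg m
  have a1 : ‖H s‖ * ‖s‖ ≤ |C| * (1 + |s.re|) ^ (-(1 + δ)) := by
    have b1 : ‖H s‖ ≤ |C| * (1 + ‖s‖) ^ (-(2 + δ)) :=
      hHs.trans (mul_le_mul_of_nonneg_right (le_abs_self C) (Real.rpow_nonneg hs0.le _))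
    calc ‖H s‖ * ‖s‖ ≤ (|C| * (1 + ‖s‖) ^ (-(2 + δ))) * (1 + ‖s‖) :=
          mul_le_mul b1 (by linarith) (norm_nonneg _) ((norm_nonneg _).trans b1)
      _ = |C| * (1 + ‖s‖) ^ (-(1 + δ)) := by
          rw [mul_assoc, ← Real.rpow_add_one hs0.ne']
          congr 2; ring
      _ ≤ |C| * (1 + |s.re|) ^ (-(1 + δ)) := by
          apply mul_le_mul_of_nonneg_left _ (abs_nonneg C)
          apply Real.rpow_le_rpow_of_nonpos (by positivity) _ (by linarith)
          linarith [Complex.abs_re_le_norm s]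
  have a2 := inv_Gamma_bound (m + 1 - 2 * s.im) s.re (by linarith)
  have e : (((m + 1 - 2 * s.im : ℝ) : ℂ) + ((2 * s.re : ℝ) : ℂ) * I) = m + 2 * I * s + 1 := by
    conv_rhs => rw [← Complex.re_add_im s]
    push_cast
    linear_combination (- 2 * (s.im : ℂ)) * Complex.I_sq
  rw [e] at a2
  have hGp := Real.Gamma_pos_of_pos (by linarith : 0 < m + 1 - 2 * s.im)
  rw [gfun, norm_mul, norm_mul]
  calc _ ≤ (|C| * (1 + |s.re|) ^ (-(1 + δ))) *
        (2 * Real.cosh (π * s.re) / Real.Gamma (m + 1 - 2 * s.im)) :=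
        mul_le_mul a1 a2 (norm_nonneg _) ((by positivity : 0 ≤ ‖H s‖ * ‖s‖).trans a1)
    _ = _ := by ring

lemma gfun_diff {A δ : ℝ} {h : ℝ → ℝ} {H : ℂ → ℂ} (hh : IsInHClass A δ h H) (m : ℕ) :
    DifferentiableOn ℂ (gfun H m) {s : ℂ | -A ≤ s.im ∧ s.im ≤ 0} := by
  have h1 : DifferentiableOn ℂ H {s : ℂ | -A ≤ s.im ∧ s.im ≤ 0} :=
    hh.holo.mono (fun s hs => abs_le.2 ⟨hs.1, by have h1 := hs.1; have h2 := hs.2; linarith⟩)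
  have h2 : Differentiable ℂ (fun s : ℂ => (Complex.Gamma (m + 2 * I * s + 1))⁻¹) :=
    Complex.differentiable_one_div_Gamma.comp (by fun_prop)
  exact (h1.mul differentiableOn_id).mul h2.differentiableOn

lemma Gamma_lower_compact (K : ℝ) (hK : 1 ≤ K) :
    ∃ ε > 0, ∀ c ∈ Set.Icc 1 K, ε ≤ Real.Gamma c := by
  obtain ⟨c, hc, hmin⟩ := (isCompact_Icc (a := 1) (b := K)).exists_isMinOn
    (Set.nonempty_Icc.2 hK) (f := Real.Gamma) (fun c hc =>
      (Real.differentiableAt_Gamma (fun n => by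
        have := hc.1
        have : (0:ℝ) ≤ n := Nat.cast_nonneg n
        linarith)).continuousAt.continuousWithinAt)
  exact ⟨Real.Gamma c, Real.Gamma_pos_of_pos (by linarith [hc.1]), fun d hd => hmin hd⟩

/-- The `m`-th integral. -/
noncomputable def Wint (H : ℂ → ℂ) (m : ℕ) (y : ℝ) : ℂ :=
  ∫ u : ℝ, gfun H m u * Complex.exp (2 * I * u * Real.log y) / (Real.cosh (π * u) : ℝ)

lemma Wint_good {A δ : ℝ} {h : ℝ → ℝ} {H : ℂ → ℂ} (hδ : 0 < δ) (hh : IsInHClass A δ h H)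
    (N m : ℕ) (hN : (N : ℝ) ≤ A) (hm : m < N) :
    GoodE N (fun x => ((x / 2 : ℝ) : ℂ) ^ (2 * m) * Wint H m (x / 2)) := by
  obtain ⟨K, hK, hb⟩ := gfun_bound hδ hh
  obtain ⟨ε, hε, hG⟩ := Gamma_lower_compact (m + 1 + 2 * A) (by
    have : (0:ℝ) ≤ m := Nat.cast_nonneg m
    have : (0:ℝ) ≤ N := Nat.cast_nonneg N
    linarith)
  have hle : ((N - m : ℕ) : ℝ) ≤ A := le_trans (by exact_mod_cast Nat.sub_le N m) hN
  obtain ⟨c, C, hc⟩ := multi_step (gfun H m) (N - m) δ (K / ε) hδ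
    ((gfun_diff hh m).mono (fun s hs => ⟨by have := hs.1; linarith, hs.2⟩)) (by
      intro s h1 h2
      refine (hb m s (by linarith) h2).trans ?_
      have hg := hG (m + 1 - 2 * s.im) ⟨by
        have : (0:ℝ) ≤ m := Nat.cast_nonneg m
        linarith, by linarith⟩
      have : K / Real.Gamma (m + 1 - 2 * s.im) ≤ K / ε := div_le_div_of_nonneg_left hK hε hg
      have h3 := (Real.cosh_pos (π * s.re)).le
      have h4 : 0 ≤ (1 + |s.re|) ^ (-(1 + δ)) := Real.rpow_nonneg (by positivity) _
      exact mul_le_mul_of_nonneg_right (mul_le_mul_of_nonneg_right this h3) h4)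
  have hA : GoodE N (fun x => ((x / 2 : ℝ) : ℂ) ^ (2 * m) * (Wint H m (x / 2)
      - ∑ j ∈ Finset.range (N - m), c j * ((x / 2 : ℝ) : ℂ) ^ (2 * j + 1))) := by
    refine GoodE.of_bound (C / 2 ^ (2 * N)) (fun x hx => ?_)
    have hx0 : 0 < x / 2 := by linarith [hx.1]
    have := hc (x / 2) hx0
    rw [norm_mul, norm_pow, Complex.norm_real, Real.norm_of_nonneg hx0.le]
    refine (mul_le_mul_of_nonneg_left this (by positivity)).trans (le_of_eq ?_)
    rw [mul_left_comm, ← pow_add, show 2 * m + 2 * (N - m) = 2 * N by omega, div_pow]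
    ring
  have hB : GoodE N (fun x => ∑ j ∈ Finset.range (N - m),
      (c j / 2 ^ (2 * m + 2 * j + 1)) * (x : ℂ) ^ (2 * m + 2 * j + 1)) :=
    GoodE.sum (F := fun j x => (c j / 2 ^ (2 * m + 2 * j + 1)) * (x : ℂ) ^ (2 * m + 2 * j + 1)) _
      (fun j hj => (GoodE.monomial (2 * m + 2 * j + 1) (by omega) (by omega)).const_mul _)
  refine (hA.add hB).congr (fun x _ => ?_)
  rw [mul_sub, Finset.mul_sum, sub_add, ← Finset.sum_sub_distrib, Finset.sum_eq_zero, sub_zero]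
  intro j _
  push_cast
  rw [div_pow, div_pow, pow_succ, pow_add, pow_succ, pow_succ, pow_add]
  field_simp
  ring

/-- For `h ∈ 𝓗(A,δ)` with `A > 13`, `H⁺` has a Taylor-type expansion
`H⁺(x) = ∑_{m=1}^{2⌊A⌋-1} α_m x^m + O_A(x^{2⌊A⌋})` on `(0, 4π)`. -/
theorem Hplus_taylor_expansion (A δ : ℝ) (hA : 13 < A) (hδ : 0 < δ) (h : ℝ → ℝ) (H : ℂ → ℂ)
    (hh : IsInHClass A δ h H) :
    ∃ (α : ℕ → ℂ) (C : ℝ), ∀ x ∈ Set.Ioo (0 : ℝ) (4 * π),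
      ‖Hplus h x - ∑ m ∈ Finset.Icc 1 (2 * ⌊A⌋₊ - 1), α m * (x : ℂ) ^ m‖
        ≤ C * x ^ (2 * ⌊A⌋₊) := by
  set N := ⌊A⌋₊ with hN
  have hNA : (N : ℝ) ≤ A := Nat.floor_le (by linarith)
  change GoodE N (Hplus h)
  obtain ⟨K, hK, hb⟩ := gfun_bound hδ hh
  set Φ : ℝ → ℝ := fun u => (1 + ‖u‖) ^ (-(1 + δ)) with hΦ
  have hΦi : Integrable Φ := integrable_one_add_norm (by simp; exact hδ)
  have hΦ0 : ∀ u, 0 ≤ Φ u := fun u => Real.rpow_nonneg (by positivity) _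
  set L : ℝ := K * ∫ u, Φ u with hL
  have hL0 : 0 ≤ L := mul_nonneg hK (integral_nonneg hΦ0)
  set w : ℕ → ℝ → ℝ → ℂ := fun m y u =>
    gfun H m u * Complex.exp (2 * I * u * Real.log y) / (Real.cosh (π * u) : ℝ) with hw
  have hwb : ∀ m y u, ‖w m y u‖ ≤ K * Φ u := by
    intro m y u
    have hc := Real.cosh_pos (π * u)
    have h1 := hb m u (by simp; linarith) (by simp)
    have h2 : ‖Complex.exp (2 * I * u * Real.log y)‖ = 1 := by
      rw [Complex.norm_exp]; simp
    simp only [hw]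
    rw [norm_div, norm_mul, h2, mul_one, Complex.norm_real, Real.norm_of_nonneg hc.le,
      div_le_iff₀ hc]
    refine h1.trans ?_
    simp only [Complex.ofReal_im, Complex.ofReal_re, mul_zero, sub_zero]
    rw [Real.Gamma_nat_eq_factorial]
    have h3 : K / (m.factorial : ℝ) ≤ K :=
      div_le_self hK (by exact_mod_cast Nat.succ_le_of_lt (Nat.factorial_pos m))
    have h4 := mul_le_mul_of_nonneg_right (mul_le_mul_of_nonneg_right h3 hc.le) (hΦ0 u)
    calc _ ≤ K * Real.cosh (π * u) * Φ u := h4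
      _ = _ := by ring
  have hwi : ∀ m y, Integrable (w m y) := by
    intro m y
    refine (hΦi.const_mul K).mono' ?_ (Filter.Eventually.of_forall (hwb m y))
    apply Continuous.aestronglyMeasurable
    simp only [hw]
    apply Continuous.div
    · apply Continuous.mul
      · exact (gfun_diff hh m).continuousOn.comp_continuous (by fun_prop)
          (fun u => ⟨by simp; linarith, by simp⟩)
      · fun_prop
    · fun_prop
    · intro x; exact_mod_cast (Real.cosh_pos _).ne'
  have hwn : ∀ m y, ∫ u, ‖w m y u‖ ≤ L := by
    intro m y
    rw [hL, ← integral_const_mul]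
    exact integral_mono (hwi m y).norm (hΦi.const_mul K) (hwb m y)
  set a : ℕ → ℝ → ℂ := fun m y => (-1) ^ m / (m.factorial : ℂ) * (y : ℂ) ^ (2 * m) with ha
  have han : ∀ m y, 0 < y → ‖a m y‖ = (y ^ 2) ^ m / (m.factorial : ℝ) := by
    intro m y hy
    simp only [ha]
    rw [norm_mul, norm_div, norm_pow, norm_neg, norm_one, one_pow, norm_pow, Complex.norm_real,
      Real.norm_of_nonneg hy.le, Complex.norm_natCast, pow_mul]
    ring
  have hWn : ∀ m y, ‖Wint H m y‖ ≤ L := fun m y =>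
    (norm_integral_le_integral_norm _).trans (hwn m y)
  have hsumr : ∀ y : ℝ, Summable (fun m : ℕ => (y ^ 2) ^ m / (m.factorial : ℝ)) := fun y =>
    Real.summable_pow_div_factorial _
  have hkey : ∀ x ∈ Set.Ioo (0:ℝ) (4 * π),
      HasSum (fun m => a m (x / 2) * Wint H m (x / 2))
        (∫ t : ℝ, (h t : ℂ) * besselJ (2 * Complex.I * t) x *
          ((t : ℂ) / (Real.cosh (π * t) : ℂ))) := by
    intro x hx
    have hy : 0 < x / 2 := by linarith [hx.1]
    have hs := hasSum_integral_of_summable_integral_norm (μ := volume)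
      (F := fun m u => a m (x / 2) * w m (x / 2) u) (fun m => (hwi m _).const_mul _) (by
        refine Summable.of_nonneg_of_le (fun m => integral_nonneg (fun u => norm_nonneg _))
          (fun m => ?_) ((hsumr (x / 2)).mul_right L)
        simp only [norm_mul]
        rw [integral_const_mul, han m _ hy]
        exact mul_le_mul_of_nonneg_left (hwn m _) (by positivity))
    have ef : (fun m => a m (x / 2) * Wint H m (x / 2)) =
        fun m => ∫ u : ℝ, a m (x / 2) * w m (x / 2) u := by
      funext m
      rw [integral_const_mul]; rfl
    have ei : (∫ t : ℝ, (h t : ℂ) * besselJ (2 * Complex.I * t) x *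
          ((t : ℂ) / (Real.cosh (π * t) : ℂ))) =
        ∫ u : ℝ, ∑' m, a m (x / 2) * w m (x / 2) u := by
      congr 1
      funext t
      rw [besselJ, ← tsum_mul_left, ← tsum_mul_right]
      congr 1
      funext m
      simp only [ha, hw, gfun]
      have e1 : Complex.exp ((2 * m + 2 * I * t) * Real.log (x / 2)) =
          ((x / 2 : ℝ) : ℂ) ^ (2 * m) * Complex.exp (2 * I * t * Real.log (x / 2)) := by
        have : (2 * m + 2 * I * t) * (Real.log (x / 2) : ℂ) =
            ((2 * m : ℕ) : ℂ) * (Real.log (x / 2) : ℂ) + 2 * I * t * Real.log (x / 2) := by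
          push_cast; ring
        rw [this, Complex.exp_add, Complex.exp_nat_mul, ← Complex.ofReal_exp, Real.exp_log hy]
      rw [e1, hh.extends_h t]
      simp only [div_eq_mul_inv, mul_inv]
      ring
    rw [ef, ei]
    exact hs
  have hfin : GoodE N (fun x => ∑ m ∈ Finset.range N, a m (x / 2) * Wint H m (x / 2)) := by
    apply GoodE.sum (F := fun m x => a m (x / 2) * Wint H m (x / 2))
    intro m hm
    refine ((Wint_good hδ hh N m hNA hm).const_mul ((-1) ^ m / (m.factorial : ℂ))).congr
      (fun x _ => ?_)
    simp only [ha]; ring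
  have htail : GoodE N (fun x => ∑' m, a (m + N) (x / 2) * Wint H (m + N) (x / 2)) := by
    refine GoodE.of_bound (Real.exp ((2 * π) ^ 2) * L / 2 ^ (2 * N)) (fun x hx => ?_)
    have hy : 0 < x / 2 := by linarith [hx.1]
    have hy2 : x / 2 ≤ 2 * π := by linarith [hx.2]
    have hE : HasSum (fun m : ℕ => (x / 2) ^ (2 * N) * L * (((x / 2) ^ 2) ^ m / (m.factorial : ℝ)))
        ((x / 2) ^ (2 * N) * L * Real.exp ((x / 2) ^ 2)) := by
      apply HasSum.mul_left
      have := NormedSpace.expSeries_div_hasSum_exp ((x / 2) ^ 2 : ℝ)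
      rwa [← Real.exp_eq_exp_ℝ] at this
    have hbd := tsum_of_norm_bounded (f := fun m => a (m + N) (x / 2) * Wint H (m + N) (x / 2))
      hE (fun m => by
        rw [norm_mul, han _ _ hy]
        have h1 : ((x / 2) ^ 2) ^ (m + N) / ((m + N).factorial : ℝ) ≤
            (x / 2) ^ (2 * N) * (((x / 2) ^ 2) ^ m / (m.factorial : ℝ)) := by
          rw [pow_add, mul_comm (((x / 2) ^ 2) ^ m), ← pow_mul _ 2 N, mul_div_assoc]
          apply mul_le_mul_of_nonneg_left _ (by positivity)
          apply div_le_div_of_nonneg_left (by positivity) (by positivity)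
          exact_mod_cast Nat.factorial_le (Nat.le_add_right m N)
        calc _ ≤ (x / 2) ^ (2 * N) * (((x / 2) ^ 2) ^ m / (m.factorial : ℝ)) * L :=
              mul_le_mul h1 (hWn _ _) (norm_nonneg _) (by positivity)
          _ = _ := by ring)
    refine hbd.trans ?_
    have h2 : Real.exp ((x / 2) ^ 2) ≤ Real.exp ((2 * π) ^ 2) :=
      Real.exp_le_exp.2 (pow_le_pow_left₀ hy.le hy2 2)
    calc _ ≤ (x / 2) ^ (2 * N) * L * Real.exp ((2 * π) ^ 2) :=
          mul_le_mul_of_nonneg_left h2 (by positivity)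
      _ = _ := by rw [div_pow]; ring
  refine ((hfin.add htail).const_mul (2 * Complex.I / (π : ℂ))).congr (fun x hx => ?_)
  have hs := hkey x hx
  rw [Hplus, ← hs.tsum_eq, ← hs.summable.sum_add_tsum_nat_add N]
end

section
/- There is an absolute constant C such that the following holds: for every integer d ≥ 2 and every real X ≥ 2, if either a(n) = log n for all n ≤ X or a(n) = 1 for all n ≤ X, then ∫_{−∞}^{∞} Σ*_{χ mod d} |Σ_{1 ≤ n ≤ X} a(n) χ(n) n^{−1/2−it}|⁴ dt/(t²+1) ≤ C · d · (log(dX))^{13}. -/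
open MeasureTheory Real Complex

/-- The sum of `f` over all primitive Dirichlet characters modulo `d`
(a finite sum, since there are finitely many Dirichlet characters modulo `d`). -/
noncomputable def sumPrimitive (d : ℕ) (f : DirichletCharacter ℂ d → ℝ) : ℝ :=
  ∑ᶠ χ ∈ {χ : DirichletCharacter ℂ d | χ.IsPrimitive}, f χ

open FourierTransform in
theorem lorentz_fourier (w : ℝ) :
    𝓕 (fun x : ℝ => ((Real.exp (-|x| / 2) : ℝ) : ℂ)) w = ((1 / 4 + (2 * π * w) ^ 2 : ℝ) : ℂ)⁻¹ := by
  rw [Real.fourier_eq']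
  have hre1 : (0:ℝ) < ((1 / 2 : ℂ) - 2 * π * w * I).re := by simp
  have hre2 : (-(1 / 2 : ℂ) - 2 * π * w * I).re < 0 := by simp
  have e1 : Set.EqOn (fun v : ℝ => cexp (↑(-2 * π * inner ℝ v w) * I) • ((Real.exp (-|v| / 2) : ℝ) : ℂ))
      (fun v : ℝ => cexp (((1 / 2 : ℂ) - 2 * π * w * I) * v)) (Set.Iic 0) := by
    intro v hv
    simp only [Set.mem_Iic] at hv
    simp only [abs_of_nonpos hv, smul_eq_mul, ofReal_exp, ← Complex.exp_add]
    congr 1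
    simp
    ring
  have e2 : Set.EqOn (fun v : ℝ => cexp (↑(-2 * π * inner ℝ v w) * I) • ((Real.exp (-|v| / 2) : ℝ) : ℂ))
      (fun v : ℝ => cexp ((-(1 / 2 : ℂ) - 2 * π * w * I) * v)) (Set.Ioi 0) := by
    intro v hv
    simp only [Set.mem_Ioi] at hv
    simp only [abs_of_pos hv, smul_eq_mul, ofReal_exp, ← Complex.exp_add]
    congr 1
    simp
    ring
  rw [← intervalIntegral.integral_Iic_add_Ioi (b := (0:ℝ))
    ((integrableOn_exp_mul_complex_Iic hre1 0).congr_fun e1.symm measurableSet_Iic)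
    ((integrableOn_exp_mul_complex_Ioi hre2 0).congr_fun e2.symm measurableSet_Ioi),
    setIntegral_congr_fun measurableSet_Iic e1, setIntegral_congr_fun measurableSet_Ioi e2,
    integral_exp_mul_complex_Iic hre1, integral_exp_mul_complex_Ioi hre2]
  have n1 : ((1 / 2 : ℂ) - 2 * π * w * I) ≠ 0 := by
    intro h; rw [h] at hre1; simp at hre1
  have n2 : (-(1 / 2 : ℂ) - 2 * π * w * I) ≠ 0 := by
    intro h; rw [h] at hre2; simp at hre2
  have n3 : ((1 / 4 + (2 * π * w) ^ 2 : ℝ) : ℂ) ≠ 0 := by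
    norm_cast; positivity
  push_cast at n3 ⊢
  have : (1 / 4 + (2 * π * w) ^ 2 : ℂ) = -(((1 / 2 : ℂ) - 2 * π * w * I) * (-(1 / 2 : ℂ) - 2 * π * w * I)) := by
    ring_nf; simp
  rw [this]
  simp only [mul_zero, Complex.exp_zero]
  have h3 : ∀ a b : ℂ, a ≠ 0 → b ≠ 0 → a - b = 1 → 1 / a + -1 / b = (-(a * b))⁻¹ := by
    intro a b ha hb hab
    field_simp
    linear_combination -hab
  exact h3 _ _ n1 n2 (by ring)

theorem lorentz_integrable : Integrable (fun t : ℝ => (1 / 4 + t ^ 2)⁻¹) := by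
  have h := (integrable_inv_one_add_sq.comp_mul_left' (R := (2:ℝ)) (by norm_num)).const_mul 4
  refine h.congr (Filter.Eventually.of_forall fun t => ?_)
  have : (1 + (2 * t) ^ 2) = 4 * (1 / 4 + t ^ 2) := by ring
  simp only [this, mul_inv]
  ring

open FourierTransform in
theorem lorentz_integral (x : ℝ) :
    ∫ t : ℝ, cexp (x * t * I) * (((1 / 4 + t ^ 2)⁻¹ : ℝ) : ℂ) = 2 * π * Real.exp (-|x| / 2) := by
  have hc : Continuous (fun x : ℝ => ((Real.exp (-|x| / 2) : ℝ) : ℂ)) := by fun_prop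
  have hi : Integrable (fun x : ℝ => ((Real.exp (-|x| / 2) : ℝ) : ℂ)) := by
    apply Integrable.ofReal
    rw [← integrableOn_univ, ← Set.Iic_union_Ioi (a := (0:ℝ)), integrableOn_union]
    constructor
    · refine (integrableOn_exp_mul_Iic (a := 1 / 2) (by norm_num) 0).congr_fun ?_ measurableSet_Iic
      intro v hv
      simp only [Set.mem_Iic] at hv
      show Real.exp _ = Real.exp _
      rw [abs_of_nonpos hv]
      ring_nf
    · refine (integrableOn_exp_mul_Ioi (a := -1 / 2) (by norm_num) 0).congr_fun ?_ measurableSet_Ioi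
      intro v hv
      simp only [Set.mem_Ioi] at hv
      show Real.exp _ = Real.exp _
      rw [abs_of_pos hv]
      ring_nf
  have hF : 𝓕 (fun x : ℝ => ((Real.exp (-|x| / 2) : ℝ) : ℂ)) =
      fun w : ℝ => (((1 / 4 + (2 * π * w) ^ 2)⁻¹ : ℝ) : ℂ) := by
    ext w; rw [lorentz_fourier]; push_cast; rfl
  have hi2 : Integrable (𝓕 (fun x : ℝ => ((Real.exp (-|x| / 2) : ℝ) : ℂ))) := by
    rw [hF]
    apply Integrable.ofReal
    exact lorentz_integrable.comp_mul_left' (R := 2 * π) (by positivity)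
  have := congrFun (hc.fourierInv_fourier_eq hi hi2) x
  rw [Real.fourierInv_eq', hF] at this
  have h2 := Measure.integral_comp_mul_left
    (fun t : ℝ => cexp (x * t * I) * (((1 / 4 + t ^ 2)⁻¹ : ℝ) : ℂ)) (2 * π)
  have h3 : (∫ v : ℝ, cexp (↑(2 * π * inner ℝ v x) * I) • (((1 / 4 + (2 * π * v) ^ 2)⁻¹ : ℝ) : ℂ)) =
      ∫ v : ℝ, cexp (x * (2 * π * v : ℝ) * I) * (((1 / 4 + (2 * π * v) ^ 2)⁻¹ : ℝ) : ℂ) := by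
    congr 1
    ext v
    simp only [smul_eq_mul]
    congr 3
    simp
    ring
  rw [← this, h3, h2, abs_of_pos (by positivity)]
  have : (π : ℂ) ≠ 0 := by exact_mod_cast Real.pi_ne_zero
  simp only [Complex.real_smul]
  generalize (∫ t : ℝ, cexp (x * t * I) * (((1 / 4 + t ^ 2)⁻¹ : ℝ) : ℂ)) = J
  push_cast
  field_simp


theorem sum_telescope (K M : ℕ) (hM : 1 ≤ M) (hMK : M ≤ K) :
    ∑ k ∈ Finset.Icc 1 K, (if M ≤ k then (1 / ((k : ℝ) * (k + 1))) else 0) + 1 / ((K : ℝ) + 1) = 1 / M := by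
  induction K, hMK using Nat.le_induction with
  | base =>
    rw [Finset.sum_eq_single M]
    · have : (M : ℝ) ≠ 0 := by positivity
      simp
      field_simp
      ring
    · intro b hb hne
      rw [if_neg]
      simp at hb; omega
    · intro h; simp at h; omega
  | succ n hn ih =>
    rw [Finset.sum_Icc_succ_top (by omega), if_pos (by omega), ← ih]
    push_cast
    have : (n : ℝ) + 1 ≠ 0 := by positivity
    have : (n : ℝ) + 1 + 1 ≠ 0 := by positivity
    field_simp
    ring

theorem norm_sq_sum_eq {ι : Type*} (s : Finset ι) (f : ι → ℂ) :
    ((‖∑ i ∈ s, f i‖ ^ 2 : ℝ) : ℂ) = ∑ i ∈ s, ∑ j ∈ s, f i * (starRingEnd ℂ) (f j) := by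
  rw [ofReal_pow, ← Complex.mul_conj', map_sum, Finset.sum_mul_sum]

theorem kernel_eq (m n : ℕ) (hm : 1 ≤ m) (hn : 1 ≤ n) (t : ℝ) :
    (m : ℂ) ^ (-(1 / 2 : ℂ) - I * t) * (starRingEnd ℂ) ((n : ℂ) ^ (-(1 / 2 : ℂ) - I * t)) =
     (Real.exp (-(Real.log m + Real.log n) / 2) : ℝ) * cexp ((Real.log n - Real.log m : ℝ) * t * I) := by
  have h1 : (m : ℂ) ≠ 0 := by exact_mod_cast (by omega)
  have h2 : (n : ℂ) ≠ 0 := by exact_mod_cast (by omega)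
  rw [Complex.cpow_def_of_ne_zero h1, Complex.cpow_def_of_ne_zero h2, ← Complex.exp_conj,
    ← Complex.exp_add, ← Complex.natCast_log, ← Complex.natCast_log, Complex.ofReal_exp,
    ← Complex.exp_add]
  congr 1
  simp only [map_mul, map_sub, map_neg, map_div₀, map_one, Complex.conj_ofReal, Complex.conj_I,
    Complex.conj_ofNat]
  push_cast
  ring

theorem kernel_integrable (x : ℝ) : 
    Integrable (fun t : ℝ => cexp (x * t * I) * (((1 / 4 + t ^ 2)⁻¹ : ℝ) : ℂ)) := by
  refine lorentz_integrable.ofReal.bdd_mul (c := 1) (by fun_prop) ?_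
  refine Filter.Eventually.of_forall fun t => ?_
  rw [← Complex.ofReal_mul, Complex.norm_exp_ofReal_mul_I]

theorem kernel_max (m n : ℕ) (hm : 1 ≤ m) (hn : 1 ≤ n) :
    Real.exp (-(Real.log m + Real.log n) / 2) * Real.exp (-|Real.log n - Real.log m| / 2) =
      1 / ((max m n : ℕ) : ℝ) := by
  have h1 : (0 : ℝ) < m := by exact_mod_cast hm
  have h2 : (0 : ℝ) < n := by exact_mod_cast hn
  rw [← Real.exp_add]
  rcases le_total m n with h | h
  · rw [max_eq_right h, abs_of_nonneg (sub_nonneg.2 (Real.log_le_log h1 (by exact_mod_cast h)))]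
    rw [← Real.exp_log h2, one_div, ← Real.exp_neg, Real.exp_log h2]
    ring_nf
  · rw [max_eq_left h, abs_of_nonpos (sub_nonpos.2 (Real.log_le_log h2 (by exact_mod_cast h)))]
    rw [← Real.exp_log h1, one_div, ← Real.exp_neg, Real.exp_log h1]
    ring_nf

theorem mellin_plancherel {ι : Type*} (s : Finset ι) (c : ι → ℂ) (m : ι → ℕ) (K : ℕ)
    (hm : ∀ i ∈ s, 1 ≤ m i ∧ m i ≤ K) :
    Integrable (fun t : ℝ => ‖∑ i ∈ s, c i * (m i : ℂ) ^ (-(1 / 2 : ℂ) - I * t)‖ ^ 2 * (1 / 4 + t ^ 2)⁻¹) ∧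
    ∫ t : ℝ, ‖∑ i ∈ s, c i * (m i : ℂ) ^ (-(1 / 2 : ℂ) - I * t)‖ ^ 2 * (1 / 4 + t ^ 2)⁻¹ =
      2 * π * (∑ k ∈ Finset.Icc 1 K, ‖∑ i ∈ s with m i ≤ k, c i‖ ^ 2 * (1 / ((k : ℝ) * (k + 1)))
        + ‖∑ i ∈ s, c i‖ ^ 2 * (1 / ((K : ℝ) + 1))) := by
  have key : ∀ t : ℝ, ((‖∑ i ∈ s, c i * (m i : ℂ) ^ (-(1 / 2 : ℂ) - I * t)‖ ^ 2 * (1 / 4 + t ^ 2)⁻¹ : ℝ) : ℂ)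
      = ∑ i ∈ s, ∑ j ∈ s, (c i * (starRingEnd ℂ) (c j) * (Real.exp (-(Real.log (m i) + Real.log (m j)) / 2) : ℝ)) *
        (cexp ((Real.log (m j) - Real.log (m i) : ℝ) * t * I) * (((1 / 4 + t ^ 2)⁻¹ : ℝ) : ℂ)) := by
    intro t
    rw [Complex.ofReal_mul, norm_sq_sum_eq, Finset.sum_mul]
    refine Finset.sum_congr rfl fun i hi => ?_
    rw [Finset.sum_mul]
    refine Finset.sum_congr rfl fun j hj => ?_
    have := kernel_eq (m i) (m j) (hm i hi).1 (hm j hj).1 t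
    rw [map_mul]
    linear_combination (c i * (starRingEnd ℂ) (c j) * (((1 / 4 + t ^ 2)⁻¹ : ℝ) : ℂ)) * this
  have hI : ∀ i ∈ s, ∀ j ∈ s, Integrable (fun t : ℝ => (c i * (starRingEnd ℂ) (c j) * (Real.exp (-(Real.log (m i) + Real.log (m j)) / 2) : ℝ)) *
        (cexp ((Real.log (m j) - Real.log (m i) : ℝ) * t * I) * (((1 / 4 + t ^ 2)⁻¹ : ℝ) : ℂ))) :=
    fun i _ j _ => (kernel_integrable _).const_mul _
  have hI1 : Integrable (fun t : ℝ => ((‖∑ i ∈ s, c i * (m i : ℂ) ^ (-(1 / 2 : ℂ) - I * t)‖ ^ 2 * (1 / 4 + t ^ 2)⁻¹ : ℝ) : ℂ)) := by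
    simp_rw [key]
    exact integrable_finsetSum _ fun i hi => integrable_finsetSum _ fun j hj => hI i hi j hj
  refine ⟨?_, ?_⟩
  · exact hI1.re
  · have h1 : ((∫ t : ℝ, ‖∑ i ∈ s, c i * (m i : ℂ) ^ (-(1 / 2 : ℂ) - I * t)‖ ^ 2 * (1 / 4 + t ^ 2)⁻¹ : ℝ) : ℂ)
        = ∑ i ∈ s, ∑ j ∈ s, c i * (starRingEnd ℂ) (c j) * (2 * π * (1 / ((max (m i) (m j) : ℕ) : ℝ))) := by
      rw [← integral_complex_ofReal]
      simp_rw [key]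
      rw [integral_finsetSum _ fun i hi => integrable_finsetSum _ fun j hj => hI i hi j hj]
      refine Finset.sum_congr rfl fun i hi => ?_
      rw [integral_finsetSum _ fun j hj => hI i hi j hj]
      refine Finset.sum_congr rfl fun j hj => ?_
      rw [integral_const_mul, lorentz_integral]
      have := congrArg (fun x : ℝ => (x : ℂ)) (kernel_max (m i) (m j) (hm i hi).1 (hm j hj).1)
      simp only [Complex.ofReal_mul] at this
      rw [Complex.ofReal_div, Complex.ofReal_one] at this
      linear_combination (c i * (starRingEnd ℂ) (c j) * (2 * π)) * this
    have h2 : ((2 * π * (∑ k ∈ Finset.Icc 1 K, ‖∑ i ∈ s with m i ≤ k, c i‖ ^ 2 * (1 / ((k : ℝ) * (k + 1)))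
        + ‖∑ i ∈ s, c i‖ ^ 2 * (1 / ((K : ℝ) + 1))) : ℝ) : ℂ) =
          ∑ i ∈ s, ∑ j ∈ s, c i * (starRingEnd ℂ) (c j) * (2 * π * (1 / ((max (m i) (m j) : ℕ) : ℝ))) := by
      have h3 : ∀ k : ℕ, ((‖∑ i ∈ s with m i ≤ k, c i‖ ^ 2 * (1 / ((k : ℝ) * (k + 1))) : ℝ) : ℂ) =
          ∑ i ∈ s, ∑ j ∈ s, c i * (starRingEnd ℂ) (c j) * 
            ((if max (m i) (m j) ≤ k then (1 / ((k : ℝ) * (k + 1))) else 0 : ℝ) : ℂ) := by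
        intro k
        rw [Complex.ofReal_mul, Finset.sum_filter, norm_sq_sum_eq, Finset.sum_mul]
        refine Finset.sum_congr rfl fun i hi => ?_
        rw [Finset.sum_mul]
        refine Finset.sum_congr rfl fun j hj => ?_
        by_cases h1 : m i ≤ k <;> by_cases h2 : m j ≤ k <;> simp [h1, h2]
      rw [Complex.ofReal_mul, Complex.ofReal_add, Complex.ofReal_sum]
      simp_rw [h3]
      rw [Finset.sum_comm, Complex.ofReal_mul (‖_‖ ^ 2), norm_sq_sum_eq, Finset.sum_mul, ← Finset.sum_add_distrib,
        Finset.mul_sum]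
      refine Finset.sum_congr rfl fun i hi => ?_
      rw [Finset.sum_comm, Finset.sum_mul, ← Finset.sum_add_distrib, Finset.mul_sum]
      refine Finset.sum_congr rfl fun j hj => ?_
      have := congrArg (fun x : ℝ => (x : ℂ)) (sum_telescope K (max (m i) (m j))
        (le_max_of_le_left (hm i hi).1) (max_le (hm i hi).2 (hm j hj).2))
      simp only [Complex.ofReal_add, Complex.ofReal_sum] at this
      rw [← Finset.mul_sum, ← mul_add, this]
      push_cast
      ring
    exact_mod_cast h1.trans h2.symm


theorem count_off_fixed (d A H n n' : ℕ) (hd : 1 ≤ d) (hA : 1 ≤ A) (hAH : A ≤ H)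
    (hn : n ∈ Finset.Ico A (2 * A)) (hn' : n' ∈ Finset.Ico A (2 * A)) (hc : Nat.Coprime n d) :
    (((Finset.Ico H (2 * H)) ×ˢ (Finset.Ico H (2 * H))).filter
      (fun p : ℕ × ℕ => (d : ℤ) ∣ (n : ℤ) * p.2 - n' * p.1 ∧ (n : ℤ) * p.2 - n' * p.1 ≠ 0)).card * d
      ≤ 24 * H ^ 2 := by
  simp only [Finset.mem_Ico] at hn hn'
  set g := Nat.gcd n n' with hg
  have hg0 : 0 < g := Nat.gcd_pos_of_pos_left _ (by omega)
  obtain ⟨u, hu⟩ : g ∣ n := Nat.gcd_dvd_left _ _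
  obtain ⟨v, hv⟩ : g ∣ n' := Nat.gcd_dvd_right _ _
  have hu0 : 0 < u := by
    rcases Nat.eq_zero_or_pos u with h | h
    · subst h; omega
    · exact h
  have hv0 : 0 < v := by
    rcases Nat.eq_zero_or_pos v with h | h
    · subst h; omega
    · exact h
  have huv : Nat.Coprime u v := by
    have : Nat.gcd n n' = g * Nat.gcd u v := by rw [hu, hv, Nat.gcd_mul_left]
    rw [← hg] at this
    exact Nat.eq_of_mul_eq_mul_left hg0 (by omega)
  have hgd : IsCoprime (d : ℤ) (g : ℤ) := by
    rw [Nat.isCoprime_iff_coprime]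
    exact (Nat.Coprime.coprime_dvd_left ⟨u, hu⟩ hc).symm
  set R : ℕ := 4 * A * H / (d * g) with hR
  set Jm : ℕ := 2 * H / v with hJ
  have hdg : 0 < d * g := by positivity
  have hcard : (((Finset.Ico H (2 * H)) ×ˢ (Finset.Ico H (2 * H))).filter
      (fun p : ℕ × ℕ => (d : ℤ) ∣ (n : ℤ) * p.2 - n' * p.1 ∧ (n : ℤ) * p.2 - n' * p.1 ≠ 0)).card
      ≤ (((Finset.Icc (-(R : ℤ)) R).erase 0) ×ˢ (Finset.range (Jm + 1))).card := by
    have hdvd : ∀ p : ℕ × ℕ, (d : ℤ) ∣ (n : ℤ) * p.2 - n' * p.1 →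
        ((d * g : ℕ) : ℤ) ∣ (n : ℤ) * p.2 - n' * p.1 := by
      intro p hp
      push_cast
      refine hgd.mul_dvd hp ?_
      rw [hu, hv]
      push_cast
      exact ⟨u * p.2 - v * p.1, by ring⟩
    refine Finset.card_le_card_of_injOn
      (fun p => (((n : ℤ) * p.2 - n' * p.1) / ((d * g : ℕ) : ℤ), p.2 / v)) ?_ ?_
    · rintro ⟨h, h'⟩ hp
      simp only [Finset.coe_filter, Finset.mem_product, Finset.mem_Ico, Set.mem_ofPred_eq] at hp
      obtain ⟨⟨hh, hh'⟩, hp1, hp2⟩ := hp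
      obtain ⟨q, hq⟩ := hdvd (h, h') hp1
      simp only at hq
      simp only [Finset.coe_product, Set.mem_prod, Finset.mem_coe, Finset.mem_erase,
        Finset.mem_Icc, Finset.mem_range]
      have hdgz : ((d * g : ℕ) : ℤ) ≠ 0 := by exact_mod_cast hdg.ne'
      rw [hq, Int.mul_ediv_cancel_left _ hdgz]
      refine ⟨⟨?_, ?_⟩, ?_⟩
      · rintro rfl
        apply hp2; rw [hq]; simp
      · rw [← abs_le]
        have h1 : |(n : ℤ) * h' - n' * h| ≤ 4 * A * H := by
          have a1 : (n : ℤ) * h' ≤ (2 * A) * (2 * H) := by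
            apply mul_le_mul <;> first | positivity | (norm_cast; omega)
          have a2 : (n' : ℤ) * h ≤ (2 * A) * (2 * H) := by
            apply mul_le_mul <;> first | positivity | (norm_cast; omega)
          have a3 : 0 ≤ (n : ℤ) * h' := by positivity
          have a4 : 0 ≤ (n' : ℤ) * h := by positivity
          rw [abs_le]; constructor <;> nlinarith
        rw [hq, abs_mul, Int.abs_eq_natAbs q] at h1
        rw [Int.abs_eq_natAbs q]
        rw [abs_of_nonneg (by positivity)] at h1
        norm_cast at h1 ⊢
        rw [hR, Nat.le_div_iff_mul_le hdg]
        linarith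
      · exact Nat.lt_succ_of_le (Nat.div_le_div_right (by omega))
    · rintro ⟨h, h'⟩ hp ⟨k, k'⟩ hp2 heq
      simp only [Finset.coe_filter, Finset.mem_product, Finset.mem_Ico, Set.mem_ofPred_eq] at hp hp2
      obtain ⟨q, hq⟩ := hdvd (h, h') hp.2.1
      obtain ⟨q2, hq2⟩ := hdvd (k, k') hp2.2.1
      simp only [Prod.mk.injEq] at heq hq hq2
      have hdgz : ((d * g : ℕ) : ℤ) ≠ 0 := by exact_mod_cast hdg.ne'
      rw [hq, hq2, Int.mul_ediv_cancel_left _ hdgz, Int.mul_ediv_cancel_left _ hdgz] at heq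
      obtain ⟨rfl, hj⟩ := heq
      have e1 : (n : ℤ) * h' - n' * h = n * k' - n' * k := by rw [hq, hq2]
      have hgz : (g : ℤ) ≠ 0 := by exact_mod_cast hg0.ne'
      have e2 : (u : ℤ) * (h' - k') = v * (h - k) := by
        apply mul_left_cancel₀ hgz
        have hun : (n : ℤ) = g * u := by exact_mod_cast hu
        have hvn : (n' : ℤ) = g * v := by exact_mod_cast hv
        rw [hun, hvn] at e1
        linear_combination e1
      have e3 : (v : ℤ) ∣ (h' - k' : ℤ) := by
        have : IsCoprime (v : ℤ) (u : ℤ) := by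
          rw [Nat.isCoprime_iff_coprime]; exact huv.symm
        exact this.dvd_of_dvd_mul_left ⟨_, e2⟩
      have e4 : h' = k' := by
        have m1 : h' ≡ k' [MOD v] := by
          exact (Nat.modEq_iff_dvd.2 e3).symm
        have := Nat.div_add_mod h' v
        have h3 := Nat.div_add_mod k' v
        rw [← hj, ← m1] at h3
        omega
      subst e4
      have e5 : (h : ℤ) = k := by
        have : (v : ℤ) * (h - k) = 0 := by rw [← e2]; ring
        have hvz : (v : ℤ) ≠ 0 := by exact_mod_cast hv0.ne'
        have := (mul_eq_zero.1 this).resolve_left hvz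
        omega
      simp only [Prod.mk.injEq]
      exact ⟨by exact_mod_cast e5, trivial⟩
  have hcard2 : (((Finset.Icc (-(R : ℤ)) R).erase 0) ×ˢ (Finset.range (Jm + 1))).card = 2 * R * (Jm + 1) := by
    rw [Finset.card_product, Finset.card_erase_of_mem (by simp), Int.card_Icc, Finset.card_range]
    congr 1
    omega
  rw [hcard2] at hcard
  have f1 : R * (d * g) ≤ 4 * A * H := Nat.div_mul_le_self _ _
  have f2 : Jm * v ≤ 2 * H := Nat.div_mul_le_self _ _
  have f3 : (Jm + 1) * A ≤ 3 * H * g := by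
    have : Jm * A ≤ Jm * (g * v) := Nat.mul_le_mul_left _ (by omega)
    have : Jm * v * g ≤ 2 * H * g := Nat.mul_le_mul_right _ f2
    have : H * 1 ≤ H * g := Nat.mul_le_mul_left _ hg0
    nlinarith
  have f4 : (2 * R * (Jm + 1) * d) * (g * A) ≤ 24 * H ^ 2 * (g * A) := by
    have := Nat.mul_le_mul f1 f3
    nlinarith
  have f5 := Nat.le_of_mul_le_mul_right f4 (by positivity)
  exact (Nat.mul_le_mul_right d hcard).trans f5

theorem sum_card_divisors_le (M : ℕ) (hM : 1 ≤ M) :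
    ((∑ n ∈ Finset.Icc 1 M, n.divisors.card : ℕ) : ℝ) ≤ M * (1 + Real.log M) := by
  have h1 : ∑ n ∈ Finset.Icc 1 M, n.divisors.card = ∑ e ∈ Finset.Icc 1 M, M / e := by
    have : ∀ n ∈ Finset.Icc 1 M, n.divisors.card = ∑ e ∈ Finset.Icc 1 M, if e ∣ n then 1 else 0 := by
      intro n hn
      simp only [Finset.mem_Icc] at hn
      rw [← Finset.card_filter]
      congr 1
      ext e
      simp only [Nat.mem_divisors, Finset.mem_filter, Finset.mem_Icc]
      constructor
      · rintro ⟨h, _⟩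
        exact ⟨⟨Nat.pos_of_dvd_of_pos h (by omega), (Nat.le_of_dvd (by omega) h).trans hn.2⟩, h⟩
      · rintro ⟨_, h⟩
        exact ⟨h, by omega⟩
    rw [Finset.sum_congr rfl this, Finset.sum_comm]
    refine Finset.sum_congr rfl fun e he => ?_
    rw [← Finset.card_filter, ← Nat.Ioc_filter_dvd_card_eq_div]
    rfl
  rw [h1]
  push_cast
  have h2 : (∑ e ∈ Finset.Icc 1 M, ((M / e : ℕ) : ℝ)) ≤ ∑ e ∈ Finset.Icc 1 M, (M : ℝ) * (e : ℝ)⁻¹ := by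
    refine Finset.sum_le_sum fun e he => ?_
    rw [← div_eq_mul_inv]
    exact Nat.cast_div_le
  refine h2.trans ?_
  rw [← Finset.mul_sum]
  gcongr
  have := harmonic_le_one_add_log M
  rw [harmonic_eq_sum_Icc] at this
  push_cast at this
  exact this

theorem count_diag (A B : ℕ) :
    (((Finset.Ico A (2 * A) ×ˢ Finset.Ico A (2 * A)) ×ˢ (Finset.Ico B (2 * B) ×ˢ Finset.Ico B (2 * B))).filter
      (fun p : (ℕ × ℕ) × (ℕ × ℕ) => p.1.1 * p.2.2 = p.1.2 * p.2.1)).card ≤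
    (∑ n ∈ Finset.Icc 1 (2 * A), n.divisors.card) * (∑ n ∈ Finset.Icc 1 (2 * B), n.divisors.card) := by
  have h1 : (((Finset.Ico A (2 * A) ×ˢ Finset.Ico A (2 * A)) ×ˢ (Finset.Ico B (2 * B) ×ˢ Finset.Ico B (2 * B))).filter
      (fun p : (ℕ × ℕ) × (ℕ × ℕ) => p.1.1 * p.2.2 = p.1.2 * p.2.1)).card ≤
      ((Finset.Icc 1 (2 * A) ×ˢ Finset.Icc 1 (2 * B)).sigma (fun q : ℕ × ℕ => (q.1 * q.2).divisors)).card := by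
    refine Finset.card_le_card_of_injOn (fun p => ⟨(p.1.1, p.2.2), p.1.2⟩) ?_ ?_
    · rintro ⟨⟨n, n'⟩, ⟨h, h'⟩⟩ hp
      simp only [Finset.coe_filter, Finset.mem_product, Finset.mem_Ico, Set.mem_ofPred_eq] at hp
      simp only [Finset.mem_coe, Finset.mem_sigma, Finset.mem_product, Finset.mem_Icc, Nat.mem_divisors]
      refine ⟨⟨by omega, by omega⟩, ⟨h, hp.2⟩, ?_⟩
      have : 0 < n := by omega
      have : 0 < h' := by omega
      positivity
    · rintro ⟨⟨n, n'⟩, ⟨h, h'⟩⟩ hp ⟨⟨m, m'⟩, ⟨k, k'⟩⟩ hp2 heq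
      simp only [Finset.coe_filter, Finset.mem_product, Finset.mem_Ico, Set.mem_ofPred_eq] at hp hp2
      simp only [Sigma.mk.injEq, Prod.mk.injEq, heq_eq_eq] at heq
      obtain ⟨⟨rfl, rfl⟩, rfl⟩ := heq
      have : n' * h = n' * k := by rw [← hp.2, hp2.2]
      have := Nat.eq_of_mul_eq_mul_left (by omega) this
      rw [this]
  refine h1.trans ?_
  rw [Finset.card_sigma, Finset.sum_mul_sum, Finset.sum_product]
  refine Finset.sum_le_sum fun n hn => Finset.sum_le_sum fun h hh => ?_
  dsimp only
  rw [Nat.divisors_mul]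
  exact Finset.card_mul_le

def quadSet (d A B : ℕ) : Finset ((ℕ × ℕ) × (ℕ × ℕ)) :=
  ((Finset.Ico A (2 * A) ×ˢ Finset.Ico A (2 * A)) ×ˢ (Finset.Ico B (2 * B) ×ˢ Finset.Ico B (2 * B))).filter
      (fun p : (ℕ × ℕ) × (ℕ × ℕ) => (Nat.Coprime p.1.1 d ∧ Nat.Coprime p.2.1 d) ∧
        (d : ℤ) ∣ (p.1.1 : ℤ) * p.2.2 - p.1.2 * p.2.1)

theorem count_off (d A B : ℕ) (hd : 1 ≤ d) (hA : 1 ≤ A) (hB : 1 ≤ B) :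
    ((quadSet d A B).filter (fun p => (p.1.1 : ℤ) * p.2.2 - p.1.2 * p.2.1 ≠ 0)).card * d ≤ 24 * A ^ 2 * B ^ 2 := by
  rcases le_total A B with h | h
  · have : ((quadSet d A B).filter (fun p => (p.1.1 : ℤ) * p.2.2 - p.1.2 * p.2.1 ≠ 0)).card ≤
      ∑ q ∈ (Finset.Ico A (2 * A) ×ˢ Finset.Ico A (2 * A)).filter (fun q => Nat.Coprime q.1 d),
       (((Finset.Ico B (2 * B)) ×ˢ (Finset.Ico B (2 * B))).filter
      (fun p : ℕ × ℕ => (d : ℤ) ∣ (q.1 : ℤ) * p.2 - q.2 * p.1 ∧ (q.1 : ℤ) * p.2 - q.2 * p.1 ≠ 0)).card := by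
      rw [← Finset.card_sigma]
      refine Finset.card_le_card_of_injOn (fun p => ⟨p.1, p.2⟩) ?_ ?_
      · intro p hp
        simp only [quadSet, Finset.mem_coe, Finset.mem_filter, Finset.mem_product] at hp
        simp only [Finset.mem_coe, Finset.mem_sigma, Finset.mem_filter, Finset.mem_product]
        tauto
      · rintro ⟨a, b⟩ _ ⟨a', b'⟩ _ heq
        simp only [Sigma.mk.injEq, heq_eq_eq] at heq
        rw [heq.1, heq.2]
    refine (Nat.mul_le_mul_right d this).trans ?_
    rw [Finset.sum_mul]
    refine (Finset.sum_le_card_nsmul _ _ (24 * B ^ 2) ?_).trans ?_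
    · rintro ⟨n, n'⟩ hq
      simp only [Finset.mem_filter, Finset.mem_product] at hq
      exact count_off_fixed d A B n n' hd hA h hq.1.1 hq.1.2 hq.2
    · refine (Nat.mul_le_mul_right _ (Finset.card_filter_le _ _)).trans ?_
      rw [Finset.card_product, Nat.card_Ico]
      have : 2 * A - A = A := by omega
      rw [this]
      nlinarith
  · have : ((quadSet d A B).filter (fun p => (p.1.1 : ℤ) * p.2.2 - p.1.2 * p.2.1 ≠ 0)).card ≤
      ∑ q ∈ (Finset.Ico B (2 * B) ×ˢ Finset.Ico B (2 * B)).filter (fun q => Nat.Coprime q.1 d),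
       (((Finset.Ico A (2 * A)) ×ˢ (Finset.Ico A (2 * A))).filter
      (fun p : ℕ × ℕ => (d : ℤ) ∣ (q.1 : ℤ) * p.2 - q.2 * p.1 ∧ (q.1 : ℤ) * p.2 - q.2 * p.1 ≠ 0)).card := by
      rw [← Finset.card_sigma]
      refine Finset.card_le_card_of_injOn (fun p => ⟨p.2, p.1⟩) ?_ ?_
      · rintro ⟨⟨n, n'⟩, ⟨h, h'⟩⟩ hp
        simp only [quadSet, Finset.mem_coe, Finset.mem_filter, Finset.mem_product] at hp
        simp only [Finset.mem_coe, Finset.mem_sigma, Finset.mem_filter, Finset.mem_product]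
        have e : (h : ℤ) * n' - h' * n = -((n : ℤ) * h' - n' * h) := by ring
        rw [e, dvd_neg, neg_ne_zero]
        tauto
      · rintro ⟨a, b⟩ _ ⟨a', b'⟩ _ heq
        simp only [Sigma.mk.injEq, heq_eq_eq] at heq
        rw [heq.1, heq.2]
    refine (Nat.mul_le_mul_right d this).trans ?_
    rw [Finset.sum_mul]
    refine (Finset.sum_le_card_nsmul _ _ (24 * A ^ 2) ?_).trans ?_
    · rintro ⟨n, n'⟩ hq
      simp only [Finset.mem_filter, Finset.mem_product] at hq
      exact count_off_fixed d B A n n' hd hB h hq.1.1 hq.1.2 hq.2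
    · refine (Nat.mul_le_mul_right _ (Finset.card_filter_le _ _)).trans ?_
      rw [Finset.card_product, Nat.card_Ico]
      have : 2 * B - B = B := by omega
      rw [this]
      nlinarith

theorem count_quad (d A B : ℕ) (hd : 1 ≤ d) (hA : 1 ≤ A) (hB : 1 ≤ B) :
    ((quadSet d A B).card : ℝ) ≤ 4 * A * B * (1 + Real.log (2 * A)) * (1 + Real.log (2 * B))
      + 24 * A ^ 2 * B ^ 2 / d := by
  have h1 : (quadSet d A B).card ≤ 
    (∑ n ∈ Finset.Icc 1 (2 * A), n.divisors.card) * (∑ n ∈ Finset.Icc 1 (2 * B), n.divisors.card) +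
    ((quadSet d A B).filter (fun p => (p.1.1 : ℤ) * p.2.2 - p.1.2 * p.2.1 ≠ 0)).card := by
    rw [← Finset.card_filter_add_card_filter_not (s := quadSet d A B) (fun p => (p.1.1 : ℤ) * p.2.2 - p.1.2 * p.2.1 = 0)]
    gcongr
    refine le_trans (Finset.card_le_card ?_) (count_diag A B)
    intro p hp
    simp only [quadSet, Finset.mem_filter] at hp ⊢
    refine ⟨hp.1.1, ?_⟩
    have := sub_eq_zero.1 hp.2
    exact_mod_cast this
  have h2 := count_off d A B hd hA hB
  have h3 := sum_card_divisors_le (2 * A) (by omega)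
  have h4 := sum_card_divisors_le (2 * B) (by omega)
  have h1' : ((quadSet d A B).card : ℝ) ≤ ((∑ n ∈ Finset.Icc 1 (2 * A), n.divisors.card : ℕ) : ℝ) *
    ((∑ n ∈ Finset.Icc 1 (2 * B), n.divisors.card : ℕ) : ℝ) +
    (((quadSet d A B).filter (fun p => (p.1.1 : ℤ) * p.2.2 - p.1.2 * p.2.1 ≠ 0)).card : ℝ) := by exact_mod_cast h1
  have h5 : (((quadSet d A B).filter (fun p => (p.1.1 : ℤ) * p.2.2 - p.1.2 * p.2.1 ≠ 0)).card : ℝ) ≤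
     24 * A ^ 2 * B ^ 2 / d := by
    rw [le_div_iff₀ (by exact_mod_cast hd)]
    exact_mod_cast h2
  have h6 := mul_le_mul h3 h4 (by positivity) (by positivity)
  push_cast at h6
  push_cast at h1'
  calc _ ≤ _ := h1'
    _ ≤ _ := add_le_add h6 h5
    _ = _ := by ring


theorem conj_char {d : ℕ} [NeZero d] (ψ : DirichletCharacter ℂ d) (a : ZMod d) :
    (starRingEnd ℂ) (ψ a) = ψ⁻¹ a := by
  rw [← MulChar.star_eq_inv, MulChar.star_apply]; rfl

theorem char_inv_unit {d : ℕ} (χ : DirichletCharacter ℂ d) {a : ZMod d} (ha : IsUnit a) :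
    χ⁻¹ a = χ a⁻¹ := by
  have h1 : χ a * χ a⁻¹ = 1 := by
    rw [← map_mul, ZMod.mul_inv_of_unit a ha, map_one]
  rw [MulChar.inv_apply_eq_inv, Ring.inverse_eq_inv']
  exact inv_eq_of_mul_eq_one_right h1

theorem orth_quad {d : ℕ} [NeZero d] (n h n' h' : ZMod d) :
    ∑ χ : DirichletCharacter ℂ d, (χ n * χ⁻¹ h) * (starRingEnd ℂ) (χ n' * χ⁻¹ h') =
      if IsUnit (n' * h) ∧ n' * h = n * h' then (d.totient : ℂ) else 0 := by
  have h1 : ∀ χ : DirichletCharacter ℂ d, (χ n * χ⁻¹ h) * (starRingEnd ℂ) (χ n' * χ⁻¹ h') =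
      χ⁻¹ (n' * h) * χ (n * h') := by
    intro χ
    have e1 : ∀ (ψ : DirichletCharacter ℂ d) a, (starRingEnd ℂ) (ψ a) = ψ⁻¹ a := fun ψ a => conj_char ψ a
    rw [map_mul (starRingEnd ℂ), e1, e1, inv_inv, map_mul, map_mul]
    ring
  simp_rw [h1]
  by_cases hu : IsUnit (n' * h)
  · simp only [hu, true_and]
    rw [← DirichletCharacter.sum_char_inv_mul_char_eq ℂ hu]
    exact Finset.sum_congr rfl fun χ _ => by rw [char_inv_unit χ hu]
  · simp only [hu, false_and, if_false]
    exact Finset.sum_eq_zero fun χ _ => by rw [MulChar.map_nonunit _ hu, zero_mul]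

theorem block_bound (d A B : ℕ) [NeZero d] (c : ℕ → ℕ → ℂ) (W : ℝ) 
    (hc : ∀ n ∈ Finset.Ico A (2 * A), ∀ h ∈ Finset.Ico B (2 * B), ‖c n h‖ ≤ W) :
    ∑ χ : DirichletCharacter ℂ d,
      ‖∑ p ∈ Finset.Ico A (2 * A) ×ˢ Finset.Ico B (2 * B), c p.1 p.2 * (χ (p.1 : ZMod d) * χ⁻¹ (p.2 : ZMod d))‖ ^ 2
      ≤ d * W ^ 2 * (quadSet d A B).card := by
  set S := Finset.Ico A (2 * A) ×ˢ Finset.Ico B (2 * B) with hS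
  set P : (ℕ × ℕ) → (ℕ × ℕ) → Prop := fun p q =>
    IsUnit ((q.1 : ZMod d) * p.2) ∧ (q.1 : ZMod d) * p.2 = p.1 * q.2 with hP
  classical
  have h1 : ((∑ χ : DirichletCharacter ℂ d,
      ‖∑ p ∈ S, c p.1 p.2 * (χ (p.1 : ZMod d) * χ⁻¹ (p.2 : ZMod d))‖ ^ 2 : ℝ) : ℂ) =
      ∑ p ∈ S, ∑ q ∈ S, c p.1 p.2 * (starRingEnd ℂ) (c q.1 q.2) * (if P p q then (d.totient : ℂ) else 0) := by
    rw [Complex.ofReal_sum]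
    simp_rw [norm_sq_sum_eq]
    rw [Finset.sum_comm]
    refine Finset.sum_congr rfl fun p _ => ?_
    rw [Finset.sum_comm]
    refine Finset.sum_congr rfl fun q _ => ?_
    have := orth_quad (p.1 : ZMod d) p.2 q.1 q.2
    have h0 : (if P p q then (d.totient : ℂ) else 0) = ∑ χ : DirichletCharacter ℂ d,
        (χ (p.1 : ZMod d) * χ⁻¹ (p.2 : ZMod d)) * (starRingEnd ℂ) (χ (q.1 : ZMod d) * χ⁻¹ (q.2 : ZMod d)) := by
      rw [this]
    rw [h0, Finset.mul_sum]
    refine Finset.sum_congr rfl fun χ _ => ?_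
    simp only [map_mul]
    ring
  have h2 : (∑ χ : DirichletCharacter ℂ d,
      ‖∑ p ∈ S, c p.1 p.2 * (χ (p.1 : ZMod d) * χ⁻¹ (p.2 : ZMod d))‖ ^ 2 : ℝ) ≤
      ∑ p ∈ S, ∑ q ∈ S, W * W * (if P p q then (d : ℝ) else 0) := by
    rw [← Complex.norm_of_nonneg (r := ∑ χ : DirichletCharacter ℂ d, _) (by positivity), h1]
    refine (norm_sum_le _ _).trans (Finset.sum_le_sum fun p hp => ?_)
    refine (norm_sum_le _ _).trans (Finset.sum_le_sum fun q hq => ?_)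
    rw [hS, Finset.mem_product] at hp hq
    have b1 := hc p.1 hp.1 p.2 hp.2
    have b2 := hc q.1 hq.1 q.2 hq.2
    have hW : 0 ≤ W := (norm_nonneg _).trans b1
    rw [norm_mul, norm_mul, RCLike.norm_conj]
    gcongr
    split_ifs
    · rw [Complex.norm_natCast]
      exact_mod_cast Nat.totient_le d
    · simp
  refine h2.trans ?_
  rw [← Finset.sum_product']
  rw [← Finset.mul_sum, ← Finset.sum_filter, Finset.sum_const, nsmul_eq_mul]
  have h3 : ((S ×ˢ S).filter (fun x => P x.1 x.2)).card ≤ (quadSet d A B).card := by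
    refine Finset.card_le_card_of_injOn (fun x => ((x.1.1, x.2.1), (x.1.2, x.2.2))) ?_ ?_
    · rintro ⟨⟨n, h⟩, ⟨n', h'⟩⟩ hx
      simp only [hS, hP, Finset.mem_coe, Finset.mem_filter, Finset.mem_product] at hx
      simp only [quadSet, Finset.mem_coe, Finset.mem_filter, Finset.mem_product]
      obtain ⟨⟨⟨hx1, hx2⟩, hx3, hx4⟩, hx5, hx6⟩ := hx
      refine ⟨⟨⟨hx1, hx3⟩, hx2, hx4⟩, ⟨?_, ?_⟩, ?_⟩
      · rw [← ZMod.isUnit_iff_coprime]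
        rw [hx6] at hx5
        exact isUnit_of_mul_isUnit_left hx5
      · rw [← ZMod.isUnit_iff_coprime]
        exact isUnit_of_mul_isUnit_right hx5
      · rw [← ZMod.intCast_zmod_eq_zero_iff_dvd]
        push_cast
        rw [hx6, sub_self]
    · rintro ⟨⟨n, h⟩, ⟨n', h'⟩⟩ _ ⟨⟨m, k⟩, ⟨m', k'⟩⟩ _ heq
      simp only [Prod.mk.injEq] at heq ⊢
      tauto
  have h4 : (((S ×ˢ S).filter (fun x => P x.1 x.2)).card : ℝ) ≤ (quadSet d A B).card := by exact_mod_cast h3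
  calc _ = d * W ^ 2 * (((S ×ˢ S).filter (fun x => P x.1 x.2)).card : ℝ) := by ring
    _ ≤ _ := by gcongr

theorem gauss_norm_sq {d : ℕ} [NeZero d] (χ : DirichletCharacter ℂ d) (hχ : χ.IsPrimitive) :
    ‖gaussSum χ (ZMod.stdAddChar (N := d))‖ ^ 2 = d := by
  set τ := gaussSum χ (ZMod.stdAddChar (N := d)) with hτ
  have h1 : ∀ a : ZMod d, ∑ x : ZMod d, χ x * ZMod.stdAddChar (a * x) = χ⁻¹ a * τ := fun a => by
    rw [← gaussSum_mulShift_of_isPrimitive _ hχ]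
    rfl
  have e0 : ∀ (ψ : DirichletCharacter ℂ d) a, ψ a * (starRingEnd ℂ) (ψ a) = if IsUnit a then 1 else 0 := by
    intro ψ a
    have : (starRingEnd ℂ) (ψ a) = ψ⁻¹ a := conj_char ψ a
    rw [this, ← MulChar.mul_apply, mul_inv_cancel]
    split_ifs with h
    · rw [MulChar.one_apply h]
    · rw [MulChar.map_nonunit _ h]
  classical
  have h2 : ∑ a : ZMod d, (χ⁻¹ a * τ) * (starRingEnd ℂ) (χ⁻¹ a * τ) = d * ∑ x : ZMod d, χ x * (starRingEnd ℂ) (χ x) := by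
    simp_rw [← h1, map_sum, Finset.sum_mul_sum]
    rw [Finset.sum_comm, Finset.mul_sum]
    refine Finset.sum_congr rfl fun x _ => ?_
    rw [Finset.sum_comm]
    have : ∀ y : ZMod d, ∑ a : ZMod d, (χ x * ZMod.stdAddChar (a * x)) * (starRingEnd ℂ) (χ y * ZMod.stdAddChar (a * y))
        = χ x * (starRingEnd ℂ) (χ y) * (if x - y = 0 then (d : ℂ) else 0) := by
      intro y
      have := AddChar.sum_mulShift (x - y) (ZMod.isPrimitive_stdAddChar d)
      rw [ZMod.card] at this
      push_cast at this
      rw [← this, Finset.mul_sum]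
      refine Finset.sum_congr rfl fun a _ => ?_
      rw [map_mul (starRingEnd ℂ), mul_sub, sub_eq_add_neg, AddChar.map_add_eq_mul, AddChar.map_neg_eq_conj]
      ring
    rw [Finset.sum_congr rfl fun y _ => this y]
    rw [Finset.sum_eq_single x]
    · simp; ring
    · intro y _ hy
      rw [if_neg (by rw [sub_eq_zero]; exact hy.symm), mul_zero]
    · simp
  have h3 : ∑ x : ZMod d, χ x * (starRingEnd ℂ) (χ x) = ∑ x : ZMod d, χ⁻¹ x * (starRingEnd ℂ) (χ⁻¹ x) := by
    simp_rw [e0]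
  have h4 : ∑ x : ZMod d, χ x * (starRingEnd ℂ) (χ x) ≠ 0 := by
    simp_rw [e0]
    rw [Finset.sum_boole]
    norm_cast
    rw [← ne_eq, Finset.card_ne_zero]
    exact ⟨1, by simp⟩
  have h5 : τ * (starRingEnd ℂ) τ = d := by
    apply mul_right_cancel₀ h4
    rw [← h2, h3, Finset.mul_sum]
    refine Finset.sum_congr rfl fun x _ => ?_
    rw [map_mul]; ring
  rw [Complex.mul_conj'] at h5
  exact_mod_cast h5


theorem abel_geom (α : ℕ → ℝ) (hmono : ∀ m, 1 ≤ m → α m ≤ α (m + 1)) (h0 : 0 ≤ α 1) (z : ℂ) (hz : ‖z‖ = 1)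
    (y : ℕ) (hy : 1 ≤ y) :
    ‖(1 - z) * ∑ m ∈ Finset.Icc 1 y, (α m : ℂ) * z ^ m + α y * z ^ (y + 1)‖ ≤ α y := by
  induction y, hy using Nat.le_induction with
  | base =>
    have : (1 - z) * ∑ m ∈ Finset.Icc 1 1, (α m : ℂ) * z ^ m + α 1 * z ^ (1 + 1) = α 1 * z := by
      simp; ring
    rw [this, norm_mul, hz, Complex.norm_of_nonneg h0, mul_one]
  | succ y hy ih =>
    have e : (1 - z) * ∑ m ∈ Finset.Icc 1 (y + 1), (α m : ℂ) * z ^ m + α (y + 1) * z ^ (y + 1 + 1) =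
      ((1 - z) * ∑ m ∈ Finset.Icc 1 y, (α m : ℂ) * z ^ m + α y * z ^ (y + 1)) +
        ((α (y + 1) - α y : ℝ) : ℂ) * z ^ (y + 1) := by
      rw [Finset.sum_Icc_succ_top (by omega)]
      push_cast
      ring
    rw [e]
    refine (norm_add_le _ _).trans ?_
    rw [norm_mul, norm_pow, hz, one_pow, mul_one, Complex.norm_of_nonneg (sub_nonneg.2 (hmono y hy))]
    linarith

theorem alpha_nonneg (α : ℕ → ℝ) (hmono : ∀ m, 1 ≤ m → α m ≤ α (m + 1)) (h0 : 0 ≤ α 1) (y : ℕ) (hy : 1 ≤ y) :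
    0 ≤ α y := by
  induction y, hy using Nat.le_induction with
  | base => exact h0
  | succ y hy ih => exact ih.trans (hmono y hy)

theorem abel_geom' (α : ℕ → ℝ) (hmono : ∀ m, 1 ≤ m → α m ≤ α (m + 1)) (h0 : 0 ≤ α 1) (z : ℂ) (hz : ‖z‖ = 1)
    (y : ℕ) (L : ℝ) (hL : 0 ≤ L) (hαL : ∀ m, 1 ≤ m → m ≤ y → α m ≤ L) :
    ‖1 - z‖ * ‖∑ m ∈ Finset.Icc 1 y, (α m : ℂ) * z ^ m‖ ≤ 2 * L := by
  rcases Nat.eq_zero_or_pos y with h | h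
  · subst h; simp; positivity
  · have h1 := abel_geom α hmono h0 z hz y h
    have h2 : ‖(α y : ℂ) * z ^ (y + 1)‖ = α y := by
      rw [norm_mul, norm_pow, hz, one_pow, mul_one, Complex.norm_of_nonneg (alpha_nonneg α hmono h0 y h)]
    have h3 := hαL y h le_rfl
    rw [← norm_mul]
    have := norm_sub_le ((1 - z) * ∑ m ∈ Finset.Icc 1 y, (α m : ℂ) * z ^ m + α y * z ^ (y + 1)) ((α y : ℂ) * z ^ (y + 1))
    rw [add_sub_cancel_right] at this
    linarith

theorem norm_one_sub_std {d : ℕ} [NeZero d] (h : ℕ) (hh : 2 * h ≤ d) :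
    4 * (h : ℝ) / d ≤ ‖1 - ZMod.stdAddChar (N := d) (h : ZMod d)‖ := by
  have hd : (0 : ℝ) < d := by exact_mod_cast Nat.pos_of_ne_zero (NeZero.ne d)
  have e1 : ZMod.stdAddChar (N := d) (h : ZMod d) = cexp (I * ((2 * π * h / d : ℝ) : ℂ)) := by
    have := ZMod.stdAddChar_coe (N := d) (h : ℤ)
    push_cast at this
    rw [this]
    congr 1
    push_cast
    ring
  rw [e1, norm_sub_rev, Complex.norm_exp_I_mul_ofReal_sub_one]
  have hx0 : 0 ≤ 2 * π * h / d / 2 := by positivity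
  have hx1 : 2 * π * h / d / 2 ≤ π / 2 := by
    have : (2 * h : ℝ) ≤ d := by exact_mod_cast hh
    rw [div_div, div_le_div_iff₀ (by positivity) (by positivity)]
    nlinarith [Real.pi_pos]
  have := Real.mul_le_sin hx0 hx1
  rw [Real.norm_eq_abs]
  refine le_trans ?_ (le_abs_self _)
  have e2 : 2 / π * (2 * π * h / d / 2) = 2 * h / d := by
    have := Real.pi_ne_zero
    field_simp
  rw [e2] at this
  calc 4 * (h : ℝ) / d = 2 * (2 * h / d) := by ring
    _ ≤ _ := by gcongr

theorem F_bound {d : ℕ} [NeZero d] (α : ℕ → ℝ) (hmono : ∀ m, 1 ≤ m → α m ≤ α (m + 1)) (h0 : 0 ≤ α 1)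
    (y : ℕ) (L : ℝ) (hL : 0 ≤ L) (hαL : ∀ m, 1 ≤ m → m ≤ y → α m ≤ L) (h : ℕ) (hh1 : 1 ≤ h) (hh : 2 * h ≤ d)
    (x : ZMod d) (hx : x = h ∨ x = -h) :
    ‖∑ m ∈ Finset.Icc 1 y, (α m : ℂ) * ZMod.stdAddChar (N := d) (-(m * x))‖ ≤ L * min (y : ℝ) ((d : ℝ) / h) := by
  have hd : (0 : ℝ) < d := by exact_mod_cast Nat.pos_of_ne_zero (NeZero.ne d)
  have hh0 : (0 : ℝ) < h := by exact_mod_cast hh1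
  rw [mul_min_of_nonneg _ _ hL, le_min_iff]
  constructor
  · refine (norm_sum_le _ _).trans ?_
    have : ∀ m ∈ Finset.Icc 1 y, ‖(α m : ℂ) * ZMod.stdAddChar (N := d) (-(m * x))‖ ≤ L := by
      intro m hm
      simp only [Finset.mem_Icc] at hm
      rw [norm_mul, AddChar.norm_apply, mul_one, Complex.norm_of_nonneg (alpha_nonneg α hmono h0 m hm.1)]
      exact hαL m hm.1 hm.2
    refine (Finset.sum_le_card_nsmul _ _ _ this).trans ?_
    simp [mul_comm]
  · set z := ZMod.stdAddChar (N := d) (-x) with hz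
    have hz1 : ‖z‖ = 1 := AddChar.norm_apply _ _
    have e1 : ∑ m ∈ Finset.Icc 1 y, (α m : ℂ) * ZMod.stdAddChar (N := d) (-(m * x)) =
        ∑ m ∈ Finset.Icc 1 y, (α m : ℂ) * z ^ m := by
      refine Finset.sum_congr rfl fun m _ => ?_
      rw [hz, ← AddChar.map_nsmul_eq_pow, nsmul_eq_mul, mul_neg]
    have hz2 : 4 * (h : ℝ) / d ≤ ‖1 - z‖ := by
      have := norm_one_sub_std (d := d) h hh
      rcases hx with rfl | rfl
      · rw [hz, AddChar.map_neg_eq_conj, ← map_one (starRingEnd ℂ), ← map_sub, RCLike.norm_conj]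
        exact this
      · rw [hz, neg_neg]; exact this
    rw [e1]
    have h3 := abel_geom' α hmono h0 z hz1 y L hL hαL
    have h4 : 4 * (h : ℝ) / d * ‖∑ m ∈ Finset.Icc 1 y, (α m : ℂ) * z ^ m‖ ≤ 2 * L :=
      (mul_le_mul_of_nonneg_right hz2 (norm_nonneg _)).trans h3
    set S := ‖∑ m ∈ Finset.Icc 1 y, (α m : ℂ) * z ^ m‖
    have hS : 0 ≤ S := norm_nonneg _
    rw [← mul_div_assoc, le_div_iff₀ hh0]
    rw [div_mul_eq_mul_div, div_le_iff₀ hd] at h4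
    nlinarith

theorem sum_dyadic {M : Type*} [AddCommMonoid M] (T : ℕ) (f : ℕ → M) :
    ∑ n ∈ Finset.Ico 1 (2 ^ T), f n = ∑ i ∈ Finset.range T, ∑ n ∈ Finset.Ico (2 ^ i) (2 * 2 ^ i), f n := by
  induction T with
  | zero => simp
  | succ T ih =>
    rw [Finset.sum_range_succ, ← ih, pow_succ, mul_comm (2 ^ T) 2, Finset.sum_Ico_consecutive]
    · exact Nat.one_le_two_pow
    · omega

theorem dyadic_bound (d : ℕ) [NeZero d] (k : ℕ) (T J : ℕ) (L : ℝ) (hL : 0 ≤ L) (c : ℕ → ℕ → ℂ)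
    (hc : ∀ n h, 1 ≤ n → 1 ≤ h → ‖c n h‖ ≤ L * min ((k : ℝ) / n) ((d : ℝ) / h))
    (hc0 : ∀ n h, k < n ^ 2 → c n h = 0) :
    ∑ χ : DirichletCharacter ℂ d,
      ‖∑ n ∈ Finset.Ico 1 (2 ^ T), ∑ h ∈ Finset.Ico 1 (2 ^ J), c n h * (χ (n : ZMod d) * χ⁻¹ (h : ZMod d))‖ ^ 2
      ≤ 28 * ((T * J) ^ 2 * (1 + T) * (1 + J)) * L ^ 2 * k * d ^ 2 := by
  have hd : (0 : ℝ) < d := by exact_mod_cast Nat.pos_of_ne_zero (NeZero.ne d)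
  have hd1 : 1 ≤ d := Nat.pos_of_ne_zero (NeZero.ne d)
  -- each block
  have hblock : ∀ i ∈ Finset.range T, ∀ j ∈ Finset.range J,
      ∑ χ : DirichletCharacter ℂ d, ‖∑ n ∈ Finset.Ico (2 ^ i) (2 * 2 ^ i), ∑ h ∈ Finset.Ico (2 ^ j) (2 * 2 ^ j),
        c n h * (χ (n : ZMod d) * χ⁻¹ (h : ZMod d))‖ ^ 2 ≤ 28 * ((1 + T) * (1 + J)) * L ^ 2 * k * d ^ 2 := by
    intro i hi j hj
    simp only [Finset.mem_range] at hi hj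
    set A := 2 ^ i with hA
    set B := 2 ^ j with hB
    have hA1 : 1 ≤ A := Nat.one_le_two_pow
    have hB1 : 1 ≤ B := Nat.one_le_two_pow
    by_cases hk : k < A ^ 2
    · have : ∀ χ : DirichletCharacter ℂ d, ‖∑ n ∈ Finset.Ico A (2 * A), ∑ h ∈ Finset.Ico B (2 * B),
          c n h * (χ (n : ZMod d) * χ⁻¹ (h : ZMod d))‖ ^ 2 = 0 := by
        intro χ
        rw [Finset.sum_eq_zero]
        · simp
        · intro n hn
          refine Finset.sum_eq_zero fun h _ => ?_
          simp only [Finset.mem_Ico] at hn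
          rw [hc0 n h (hk.trans_le (Nat.pow_le_pow_left hn.1 2)), zero_mul]
      simp only [this, Finset.sum_const_zero]
      positivity
    · have hA0 : (0 : ℝ) < A := by exact_mod_cast hA1
      have hB0 : (0 : ℝ) < B := by exact_mod_cast hB1
      have hkA : (A : ℝ) ^ 2 ≤ k := by exact_mod_cast not_lt.1 hk
      have h1 := block_bound d A B c (L * min ((k : ℝ) / A) ((d : ℝ) / B)) (by
        intro n hn h hh
        simp only [Finset.mem_Ico] at hn hh
        refine (hc n h (by omega) (by omega)).trans ?_
        have : (A : ℝ) ≤ n := by exact_mod_cast hn.1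
        have : (B : ℝ) ≤ h := by exact_mod_cast hh.1
        gcongr)
      have h2 := count_quad d A B hd1 hA1 hB1
      simp only [Finset.sum_product] at h1
      refine h1.trans ?_
      have hlog : ∀ i T : ℕ, i < T → 1 + Real.log (2 * (2 ^ i : ℕ)) ≤ 1 + T := by
        intro i T hiT
        have : (2 * (2 ^ i : ℕ) : ℝ) = 2 ^ (i + 1) := by push_cast; ring
        rw [this, Real.log_pow]
        have h3 : Real.log 2 ≤ 1 := Real.log_two_lt_d9.le.trans (by norm_num)
        have h4 : ((i + 1 : ℕ) : ℝ) ≤ T := by exact_mod_cast hiT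
        have : ((i + 1 : ℕ) : ℝ) * Real.log 2 ≤ ((i + 1 : ℕ) : ℝ) * 1 := by gcongr
        linarith
      have hl1 := hlog i T hi
      have hl2 := hlog j J hj
      rw [← hA] at hl1
      rw [← hB] at hl2
      have hl0 : 0 ≤ 1 + Real.log (2 * A) := by
        have : 0 ≤ Real.log (2 * A) := Real.log_nonneg (by 
          have : (1 : ℝ) ≤ A := by exact_mod_cast hA1
          linarith)
        linarith
      have hl0' : 0 ≤ 1 + Real.log (2 * B) := by
        have : 0 ≤ Real.log (2 * B) := Real.log_nonneg (by 
          have : (1 : ℝ) ≤ B := by exact_mod_cast hB1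
          linarith)
        linarith
      set m := min ((k : ℝ) / A) ((d : ℝ) / B) with hm
      have hm0 : 0 ≤ m := le_min (by positivity) (by positivity)
      have hm1 : m ^ 2 ≤ (k / A) * (d / B) := by
        rw [sq]; exact mul_le_mul (min_le_left _ _) (min_le_right _ _) hm0 (by positivity)
      have hm2 : m ^ 2 ≤ (d / B) ^ 2 := by
        gcongr; exact min_le_right _ _
      have hT0 : (0 : ℝ) ≤ T := by positivity
      have hJ0 : (0 : ℝ) ≤ J := by positivity
      have hll : (1 + Real.log (2 * A)) * (1 + Real.log (2 * B)) ≤ (1 + T) * (1 + J) := by gcongr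
      have h5 : m ^ 2 * (quadSet d A B).card ≤ 28 * ((1 + T) * (1 + J)) * k * d := by
        calc m ^ 2 * (quadSet d A B).card ≤ m ^ 2 * (4 * A * B * (1 + Real.log (2 * A)) * (1 + Real.log (2 * B))
            + 24 * A ^ 2 * B ^ 2 / d) := by gcongr
          _ = m ^ 2 * (4 * A * B * ((1 + Real.log (2 * A)) * (1 + Real.log (2 * B)))) + m ^ 2 * (24 * A ^ 2 * B ^ 2 / d) := by ring
          _ ≤ ((k / A) * (d / B)) * (4 * A * B * ((1 + T) * (1 + J))) + (d / B) ^ 2 * (24 * A ^ 2 * B ^ 2 / d) := by gcongr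
          _ = 4 * k * d * ((1 + T) * (1 + J)) + 24 * d * A ^ 2 := by field_simp
          _ ≤ 4 * k * d * ((1 + T) * (1 + J)) + 24 * d * (k * ((1 + T) * (1 + J))) := by
            have : (k : ℝ) * 1 ≤ k * ((1 + T) * (1 + J)) := by
              gcongr
              nlinarith
            gcongr
            linarith
          _ = _ := by ring
      calc (d : ℝ) * (L * m) ^ 2 * (quadSet d A B).card = d * L ^ 2 * (m ^ 2 * (quadSet d A B).card) := by ring
        _ ≤ d * L ^ 2 * (28 * ((1 + T) * (1 + J)) * k * d) := by gcongr
        _ = _ := by ring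
  have h1 : ∀ χ : DirichletCharacter ℂ d,
      ‖∑ n ∈ Finset.Ico 1 (2 ^ T), ∑ h ∈ Finset.Ico 1 (2 ^ J), c n h * (χ (n : ZMod d) * χ⁻¹ (h : ZMod d))‖ ^ 2 ≤
      (T * J) * ∑ p ∈ Finset.range T ×ˢ Finset.range J,
        ‖∑ n ∈ Finset.Ico (2 ^ p.1) (2 * 2 ^ p.1), ∑ h ∈ Finset.Ico (2 ^ p.2) (2 * 2 ^ p.2),
        c n h * (χ (n : ZMod d) * χ⁻¹ (h : ZMod d))‖ ^ 2 := by
    intro χ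
    have e : ∑ n ∈ Finset.Ico 1 (2 ^ T), ∑ h ∈ Finset.Ico 1 (2 ^ J), c n h * (χ (n : ZMod d) * χ⁻¹ (h : ZMod d)) =
       ∑ p ∈ Finset.range T ×ˢ Finset.range J,
        ∑ n ∈ Finset.Ico (2 ^ p.1) (2 * 2 ^ p.1), ∑ h ∈ Finset.Ico (2 ^ p.2) (2 * 2 ^ p.2),
        c n h * (χ (n : ZMod d) * χ⁻¹ (h : ZMod d)) := by
      rw [sum_dyadic, Finset.sum_product]
      refine Finset.sum_congr rfl fun i _ => ?_
      have e5 : ∀ n ∈ Finset.Ico (2 ^ i) (2 * 2 ^ i), ∑ h ∈ Finset.Ico 1 (2 ^ J),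
          c n h * (χ (n : ZMod d) * χ⁻¹ (h : ZMod d)) = ∑ j ∈ Finset.range J,
          ∑ h ∈ Finset.Ico (2 ^ j) (2 * 2 ^ j), c n h * (χ (n : ZMod d) * χ⁻¹ (h : ZMod d)) :=
        fun n _ => sum_dyadic J _
      rw [Finset.sum_congr rfl e5]
      exact Finset.sum_comm
    rw [e]
    refine (pow_le_pow_left₀ (norm_nonneg _) (norm_sum_le _ _) 2).trans ?_
    refine sq_sum_le_card_mul_sum_sq.trans ?_
    rw [Finset.card_product, Finset.card_range, Finset.card_range]
    push_cast
    exact le_rfl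
  refine (Finset.sum_le_sum fun χ _ => h1 χ).trans ?_
  rw [← Finset.mul_sum, Finset.sum_comm]
  have h2 : ∑ p ∈ Finset.range T ×ˢ Finset.range J, ∑ χ : DirichletCharacter ℂ d,
        ‖∑ n ∈ Finset.Ico (2 ^ p.1) (2 * 2 ^ p.1), ∑ h ∈ Finset.Ico (2 ^ p.2) (2 * 2 ^ p.2),
        c n h * (χ (n : ZMod d) * χ⁻¹ (h : ZMod d))‖ ^ 2 ≤ (T * J) * (28 * ((1 + T) * (1 + J)) * L ^ 2 * k * d ^ 2) := by
    refine (Finset.sum_le_card_nsmul _ _ (28 * ((1 + T) * (1 + J)) * L ^ 2 * k * d ^ 2) ?_).trans ?_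
    · intro p hp
      rw [Finset.mem_product] at hp
      exact hblock p.1 hp.1 p.2 hp.2
    · rw [Finset.card_product, Finset.card_range, Finset.card_range, nsmul_eq_mul]
      push_cast
      exact le_rfl
  calc _ ≤ (T * J : ℝ) * ((T * J) * (28 * ((1 + T) * (1 + J)) * L ^ 2 * k * d ^ 2)) := by gcongr
    _ = _ := by ring


theorem gauss_conj {d : ℕ} [NeZero d] (χ : DirichletCharacter ℂ d) (hχ : χ.IsPrimitive) (m : ZMod d) :
    (starRingEnd ℂ) (gaussSum χ (ZMod.stdAddChar (N := d))) * χ m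
      = ∑ x : ZMod d, χ⁻¹ x * ZMod.stdAddChar (N := d) (-(m * x)) := by
  have h1 : ∑ x : ZMod d, χ x * ZMod.stdAddChar (N := d) (m * x)
      = χ⁻¹ m * gaussSum χ (ZMod.stdAddChar (N := d)) := by
    rw [← gaussSum_mulShift_of_isPrimitive _ hχ]; rfl
  have h2 := congrArg (starRingEnd ℂ) h1
  rw [map_sum, map_mul, conj_char, inv_inv, mul_comm] at h2
  rw [← h2]
  refine Finset.sum_congr rfl fun x _ => ?_
  rw [map_mul, conj_char, AddChar.map_neg_eq_conj]

theorem zmod_split {d : ℕ} [NeZero d] (J : ℕ) (hJ : d < 2 ^ J) (f : ZMod d → ℂ) (hf : f 0 = 0) :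
    ∑ x : ZMod d, f x = ∑ h ∈ Finset.Ico 1 (2 ^ J), (if 2 * h ≤ d then f (h : ZMod d) else 0)
      + ∑ h ∈ Finset.Ico 1 (2 ^ J), (if 2 * h < d then f (-(h : ZMod d)) else 0) := by
  have h0 : ∑ x : ZMod d, f x = ∑ x : ZMod d with x ≠ 0, f x := by
    rw [Finset.sum_filter]
    refine Finset.sum_congr rfl fun x _ => ?_
    split_ifs with h
    · rfl
    · push Not at h; rw [h, hf]
  rw [h0, ← Finset.sum_filter_add_sum_filter_not _ (fun x : ZMod d => 2 * x.val ≤ d),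
    ← Finset.sum_filter, ← Finset.sum_filter]
  congr 1
  · refine Finset.sum_nbij' (fun x => x.val) (fun h => (h : ZMod d)) ?_ ?_ ?_ ?_ ?_
    · intro x hx
      simp only [Finset.mem_filter, Finset.mem_univ, true_and, Finset.mem_Ico] at hx ⊢
      have := ZMod.val_lt x
      have h3 : x.val ≠ 0 := by rw [Ne, ZMod.val_eq_zero]; exact hx.1
      omega
    · intro h hh
      simp only [Finset.mem_filter, Finset.mem_univ, true_and, Finset.mem_Ico] at hh ⊢
      have h4 : ((h : ZMod d)).val = h := ZMod.val_cast_of_lt (by omega)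
      refine ⟨?_, by rw [h4]; exact hh.2⟩
      rw [Ne, ← ZMod.val_eq_zero, h4]; omega
    · intro x _
      exact ZMod.natCast_zmod_val x
    · intro h hh
      simp only [Finset.mem_filter, Finset.mem_Ico] at hh
      exact ZMod.val_cast_of_lt (by omega)
    · intro x _
      rw [ZMod.natCast_zmod_val]
  · refine Finset.sum_nbij' (fun x => (-x).val) (fun h => -(h : ZMod d)) ?_ ?_ ?_ ?_ ?_
    · intro x hx
      simp only [Finset.mem_filter, Finset.mem_univ, true_and, Finset.mem_Ico] at hx ⊢
      have := ZMod.val_lt x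
      have h3 : x.val ≠ 0 := by rw [Ne, ZMod.val_eq_zero]; exact hx.1
      have : NeZero x := ⟨hx.1⟩
      rw [ZMod.val_neg_of_ne_zero]
      omega
    · intro h hh
      simp only [Finset.mem_filter, Finset.mem_univ, true_and, Finset.mem_Ico] at hh ⊢
      have h4 : ((h : ZMod d)).val = h := ZMod.val_cast_of_lt (by omega)
      have h5 : (h : ZMod d) ≠ 0 := by
        rw [Ne, ← ZMod.val_eq_zero, h4]; omega
      have : NeZero (h : ZMod d) := ⟨h5⟩
      refine ⟨neg_ne_zero.mpr h5, ?_⟩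
      rw [ZMod.val_neg_of_ne_zero, h4]; omega
    · intro x _
      rw [ZMod.natCast_zmod_val, neg_neg]
    · intro h hh
      simp only [Finset.mem_filter, Finset.mem_Ico] at hh
      rw [neg_neg]
      exact ZMod.val_cast_of_lt (by omega)
    · intro x _
      rw [ZMod.natCast_zmod_val, neg_neg]

theorem U_bound (d : ℕ) [NeZero d] (hd : 2 ≤ d) (α : ℕ → ℝ) (hmono : ∀ m, 1 ≤ m → α m ≤ α (m + 1))
    (h0 : 0 ≤ α 1) (L : ℝ) (hL : 0 ≤ L) (N : ℕ) (hαL : ∀ m, 1 ≤ m → m ≤ N → α m ≤ L)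
    (k P : ℕ) (hP : P ^ 2 ≤ k) (hPN : P ≤ N) (y : ℕ → ℕ) (hy : ∀ n, 1 ≤ n → n ≤ P → y n * n ≤ k)
    (hyN : ∀ n, y n ≤ N) (T J : ℕ) (hT : N < 2 ^ T) (hJ : d < 2 ^ J)
    (S : Finset (DirichletCharacter ℂ d)) (hS : ∀ χ ∈ S, χ.IsPrimitive) :
    ∑ χ ∈ S, ‖∑ n ∈ Finset.Icc 1 P, ∑ m ∈ Finset.Icc 1 (y n),
        ((α n : ℂ) * χ (n : ZMod d)) * ((α m : ℂ) * χ (m : ZMod d))‖ ^ 2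
      ≤ 112 * ((T * J) ^ 2 * (1 + T) * (1 + J)) * L ^ 4 * k * d := by
  have hdp : (0 : ℝ) < d := by positivity
  have hαn : ∀ m, 1 ≤ m → 0 ≤ α m := fun m hm => alpha_nonneg α hmono h0 m hm
  set F : ℕ → ZMod d → ℂ := fun n x =>
    ∑ m ∈ Finset.Icc 1 (y n), (α m : ℂ) * ZMod.stdAddChar (N := d) (-(m * x)) with hF
  set c0 : ℕ → ℕ → ℂ := fun n h => if n ≤ P ∧ 2 * h ≤ d then (α n : ℂ) * F n h else 0 with hc0
  set c1 : ℕ → ℕ → ℂ := fun n h => if n ≤ P ∧ 2 * h < d then (α n : ℂ) * F n (-(h : ZMod d)) else 0 with hc1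
  have hFb : ∀ n h, 1 ≤ n → 1 ≤ h → n ≤ P → 2 * h ≤ d → ∀ x : ZMod d, x = h ∨ x = -h →
      ‖(α n : ℂ) * F n x‖ ≤ L ^ 2 * min ((k : ℝ) / n) ((d : ℝ) / h) := by
    intro n h hn hh hnP hhd x hx
    have e1 := F_bound α hmono h0 (y n) L hL (fun m h1 h2 => hαL m h1 (h2.trans (hyN n))) h hh hhd x hx
    rw [norm_mul, Complex.norm_real, Real.norm_eq_abs, abs_of_nonneg (hαn n hn), pow_two, mul_assoc]
    have hnp : (0 : ℝ) < n := by exact_mod_cast hn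
    have e2 : (y n : ℝ) ≤ (k : ℝ) / n := by
      rw [le_div_iff₀ hnp]; exact_mod_cast hy n hn hnP
    refine mul_le_mul (hαL n hn (hnP.trans hPN)) (e1.trans ?_) (norm_nonneg _) hL
    gcongr
  have hmin : ∀ n h : ℕ, 0 ≤ L ^ 2 * min ((k : ℝ) / n) ((d : ℝ) / h) := fun n h => by positivity
  have hB0 := dyadic_bound d k T J (L ^ 2) (by positivity) c0
    (by
      intro n h hn hh
      simp only [hc0]
      split_ifs with hc
      · exact hFb n h hn hh hc.1 hc.2 _ (Or.inl rfl)
      · rw [norm_zero]; exact hmin n h)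
    (by
      intro n h hk
      simp only [hc0]
      rw [if_neg]
      rintro ⟨h1, _⟩
      have := Nat.pow_le_pow_left h1 2
      omega)
  have hB1 := dyadic_bound d k T J (L ^ 2) (by positivity) c1
    (by
      intro n h hn hh
      simp only [hc1]
      split_ifs with hc
      · exact hFb n h hn hh hc.1 hc.2.le _ (Or.inr rfl)
      · rw [norm_zero]; exact hmin n h)
    (by
      intro n h hk
      simp only [hc1]
      rw [if_neg]
      rintro ⟨h1, _⟩
      have := Nat.pow_le_pow_left h1 2
      omega)
  set V0 : DirichletCharacter ℂ d → ℂ := fun χ => ∑ n ∈ Finset.Ico 1 (2 ^ T), ∑ h ∈ Finset.Ico 1 (2 ^ J),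
    c0 n h * (χ (n : ZMod d) * χ⁻¹ (h : ZMod d)) with hV0
  set V1 : DirichletCharacter ℂ d → ℂ := fun χ => ∑ n ∈ Finset.Ico 1 (2 ^ T), ∑ h ∈ Finset.Ico 1 (2 ^ J),
    c1 n h * (χ (n : ZMod d) * χ⁻¹ (h : ZMod d)) with hV1
  have key : ∀ χ ∈ S, (starRingEnd ℂ) (gaussSum χ (ZMod.stdAddChar (N := d))) *
      (∑ n ∈ Finset.Icc 1 P, ∑ m ∈ Finset.Icc 1 (y n),
        ((α n : ℂ) * χ (n : ZMod d)) * ((α m : ℂ) * χ (m : ZMod d))) = V0 χ + χ⁻¹ (-1) * V1 χ := by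
    intro χ hχ
    have hz : χ⁻¹ (0 : ZMod d) = 0 := by
      have : Fact (1 < d) := ⟨hd⟩
      exact MulChar.map_zero _
    have e1 : ∀ n, (starRingEnd ℂ) (gaussSum χ (ZMod.stdAddChar (N := d))) *
        ∑ m ∈ Finset.Icc 1 (y n), ((α n : ℂ) * χ (n : ZMod d)) * ((α m : ℂ) * χ (m : ZMod d))
        = ∑ x : ZMod d, ((α n : ℂ) * χ n) * (χ⁻¹ x * F n x) := by
      intro n
      rw [Finset.mul_sum]
      have e2 : ∀ m ∈ Finset.Icc 1 (y n), (starRingEnd ℂ) (gaussSum χ (ZMod.stdAddChar (N := d))) *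
          (((α n : ℂ) * χ (n : ZMod d)) * ((α m : ℂ) * χ (m : ZMod d))) =
          ∑ x : ZMod d, ((α n : ℂ) * χ n) * (χ⁻¹ x * ((α m : ℂ) * ZMod.stdAddChar (N := d) (-(m * x)))) := by
        intro m _
        have := gauss_conj χ (hS χ hχ) (m : ZMod d)
        calc _ = ((α n : ℂ) * χ (n : ZMod d)) * (α m : ℂ) *
              ((starRingEnd ℂ) (gaussSum χ (ZMod.stdAddChar (N := d))) * χ (m : ZMod d)) := by ring
          _ = _ := by
            rw [this, Finset.mul_sum]
            refine Finset.sum_congr rfl fun x _ => by ring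
      rw [Finset.sum_congr rfl e2, Finset.sum_comm]
      refine Finset.sum_congr rfl fun x _ => ?_
      rw [hF, ← Finset.mul_sum, ← Finset.mul_sum]
    rw [Finset.mul_sum, Finset.sum_congr rfl fun n _ => e1 n]
    have e3 : ∀ n, ∑ x : ZMod d, ((α n : ℂ) * χ n) * (χ⁻¹ x * F n x) =
        ∑ h ∈ Finset.Ico 1 (2 ^ J), (if 2 * h ≤ d then ((α n : ℂ) * χ n) * (χ⁻¹ (h : ZMod d) * F n h) else 0)
        + ∑ h ∈ Finset.Ico 1 (2 ^ J), (if 2 * h < d then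
          ((α n : ℂ) * χ n) * (χ⁻¹ (-(h : ZMod d)) * F n (-(h : ZMod d))) else 0) := by
      intro n
      refine zmod_split J hJ (fun x => ((α n : ℂ) * χ n) * (χ⁻¹ x * F n x)) ?_
      simp only [hz, zero_mul, mul_zero]
    rw [Finset.sum_congr rfl fun n _ => e3 n, Finset.sum_add_distrib]
    have hsub : Finset.Icc 1 P ⊆ Finset.Ico 1 (2 ^ T) := by
      intro n hn
      rw [Finset.mem_Icc] at hn
      rw [Finset.mem_Ico]
      omega
    congr 1
    · simp only [hV0]
      rw [← Finset.sum_subset hsub]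
      · refine Finset.sum_congr rfl fun n hn => Finset.sum_congr rfl fun h _ => ?_
        rw [Finset.mem_Icc] at hn
        simp only [hc0, hn.2, true_and]
        split_ifs
        · ring
        · ring
      · intro n hn hn'
        refine Finset.sum_eq_zero fun h _ => ?_
        rw [Finset.mem_Ico] at hn
        rw [Finset.mem_Icc] at hn'
        have : ¬ n ≤ P := by omega
        simp only [hc0, this, false_and, if_false, zero_mul]
    · simp only [hV1]
      rw [Finset.mul_sum, ← Finset.sum_subset hsub]
      · refine Finset.sum_congr rfl fun n hn => ?_
        rw [Finset.mul_sum]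
        refine Finset.sum_congr rfl fun h _ => ?_
        rw [Finset.mem_Icc] at hn
        simp only [hc1, hn.2, true_and]
        have e4 : χ⁻¹ (-(h : ZMod d)) = χ⁻¹ (-1) * χ⁻¹ (h : ZMod d) := by
          rw [← map_mul]; congr 1; ring
        split_ifs
        · rw [e4]; ring
        · ring
      · intro n hn hn'
        rw [Finset.sum_eq_zero, mul_zero]
        intro h _
        rw [Finset.mem_Ico] at hn
        rw [Finset.mem_Icc] at hn'
        have : ¬ n ≤ P := by omega
        simp only [hc1, this, false_and, if_false, zero_mul]
  have key2 : ∀ χ ∈ S, d * ‖∑ n ∈ Finset.Icc 1 P, ∑ m ∈ Finset.Icc 1 (y n),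
        ((α n : ℂ) * χ (n : ZMod d)) * ((α m : ℂ) * χ (m : ZMod d))‖ ^ 2 ≤ 2 * ‖V0 χ‖ ^ 2 + 2 * ‖V1 χ‖ ^ 2 := by
    intro χ hχ
    rw [← gauss_norm_sq χ (hS χ hχ), ← mul_pow, ← Complex.norm_conj, ← norm_mul, key χ hχ]
    have h1 : ‖V0 χ + χ⁻¹ (-1) * V1 χ‖ ≤ ‖V0 χ‖ + ‖V1 χ‖ := by
      refine (norm_add_le _ _).trans ?_
      rw [norm_mul]
      have := DirichletCharacter.norm_le_one χ⁻¹ (-1)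
      nlinarith [norm_nonneg (V1 χ)]
    nlinarith [norm_nonneg (V0 χ + χ⁻¹ (-1) * V1 χ), sq_nonneg (‖V0 χ‖ - ‖V1 χ‖), norm_nonneg (V0 χ), norm_nonneg (V1 χ)]
  have h0S : ∑ χ ∈ S, ‖V0 χ‖ ^ 2 ≤ 28 * ((T * J) ^ 2 * (1 + T) * (1 + J)) * (L ^ 2) ^ 2 * k * d ^ 2 :=
    (Finset.sum_le_sum_of_subset_of_nonneg (Finset.subset_univ S) (fun _ _ _ => by positivity)).trans hB0
  have h1S : ∑ χ ∈ S, ‖V1 χ‖ ^ 2 ≤ 28 * ((T * J) ^ 2 * (1 + T) * (1 + J)) * (L ^ 2) ^ 2 * k * d ^ 2 :=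
    (Finset.sum_le_sum_of_subset_of_nonneg (Finset.subset_univ S) (fun _ _ _ => by positivity)).trans hB1
  have h2 := Finset.sum_le_sum key2
  rw [← Finset.mul_sum, Finset.sum_add_distrib, ← Finset.mul_sum, ← Finset.mul_sum] at h2
  refine le_of_mul_le_mul_left (h2.trans ?_) hdp
  calc _ ≤ 2 * (28 * ((T * J) ^ 2 * (1 + T) * (1 + J)) * (L ^ 2) ^ 2 * k * d ^ 2)
        + 2 * (28 * ((T * J) ^ 2 * (1 + T) * (1 + J)) * (L ^ 2) ^ 2 * k * d ^ 2) := by linarith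
    _ = _ := by ring


theorem hyperbola (f : ℕ → ℂ) (N k : ℕ) (P : ℕ) (hP : P = min (Nat.sqrt k) N) :
    ∑ p ∈ Finset.Icc 1 N ×ˢ Finset.Icc 1 N with p.1 * p.2 ≤ k, f p.1 * f p.2
      = 2 * ∑ n ∈ Finset.Icc 1 P, ∑ m ∈ Finset.Icc 1 (min N (k / n)), f n * f m
        - ∑ n ∈ Finset.Icc 1 P, ∑ m ∈ Finset.Icc 1 P, f n * f m := by
  have hPN : P ≤ N := by rw [hP]; exact min_le_right _ _
  have hPk : P * P ≤ k := by
    have h1 : P ≤ Nat.sqrt k := by rw [hP]; exact min_le_left _ _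
    exact (Nat.mul_le_mul h1 h1).trans (Nat.sqrt_le k)
  have e1 : ∑ n ∈ Finset.Icc 1 P, ∑ m ∈ Finset.Icc 1 (min N (k / n)), f n * f m
      = ∑ n ∈ Finset.Icc 1 N, ∑ m ∈ Finset.Icc 1 N, if n ≤ P ∧ n * m ≤ k then f n * f m else 0 := by
    have a1 : Finset.Icc 1 P = (Finset.Icc 1 N).filter (fun n => n ≤ P) := by
      ext n; simp only [Finset.mem_Icc, Finset.mem_filter]; omega
    rw [a1, Finset.sum_filter]
    refine Finset.sum_congr rfl fun n hn => ?_
    rw [Finset.mem_Icc] at hn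
    split_ifs with h
    · have a2 : Finset.Icc 1 (min N (k / n)) = (Finset.Icc 1 N).filter (fun m => n * m ≤ k) := by
        ext m
        simp only [Finset.mem_Icc, Finset.mem_filter, le_min_iff, Nat.le_div_iff_mul_le (show 0 < n by omega)]
        rw [mul_comm m n]
        tauto
      rw [a2, Finset.sum_filter]
      simp only [h, true_and]
    · simp only [h, false_and, if_false, Finset.sum_const_zero]
  have e1' : ∑ n ∈ Finset.Icc 1 P, ∑ m ∈ Finset.Icc 1 (min N (k / n)), f n * f m
      = ∑ n ∈ Finset.Icc 1 N, ∑ m ∈ Finset.Icc 1 N, if m ≤ P ∧ n * m ≤ k then f n * f m else 0 := by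
    rw [e1, Finset.sum_comm]
    refine Finset.sum_congr rfl fun n _ => Finset.sum_congr rfl fun m _ => ?_
    rw [mul_comm m n, mul_comm (f m)]
  have e2 : ∑ n ∈ Finset.Icc 1 P, ∑ m ∈ Finset.Icc 1 P, f n * f m
      = ∑ n ∈ Finset.Icc 1 N, ∑ m ∈ Finset.Icc 1 N, if n ≤ P ∧ m ≤ P then f n * f m else 0 := by
    have a1 : Finset.Icc 1 P = (Finset.Icc 1 N).filter (fun n => n ≤ P) := by
      ext n; simp only [Finset.mem_Icc, Finset.mem_filter]; omega
    rw [a1, Finset.sum_filter]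
    refine Finset.sum_congr rfl fun n hn => ?_
    split_ifs with h
    · rw [Finset.sum_filter]
      simp only [h, true_and]
    · simp only [h, false_and, if_false, Finset.sum_const_zero]
  rw [two_mul]
  nth_rewrite 2 [e1']
  rw [e1, e2, Finset.sum_filter, Finset.sum_product, ← Finset.sum_add_distrib, ← Finset.sum_sub_distrib]
  refine Finset.sum_congr rfl fun n hn => ?_
  rw [← Finset.sum_add_distrib, ← Finset.sum_sub_distrib]
  refine Finset.sum_congr rfl fun m hm => ?_
  rw [Finset.mem_Icc] at hn hm
  simp only
  by_cases hk : n * m ≤ k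
  · have hor : n ≤ P ∨ m ≤ P := by
      rcases le_total n m with h | h
      · left
        rw [hP, le_min_iff, Nat.le_sqrt]
        exact ⟨(Nat.mul_le_mul_left n h).trans hk, hn.2⟩
      · right
        rw [hP, le_min_iff, Nat.le_sqrt]
        exact ⟨(Nat.mul_le_mul_right m h).trans hk, hm.2⟩
    by_cases h1 : n ≤ P
    · by_cases h2 : m ≤ P <;> simp [hk, h1, h2]
    · have h2 : m ≤ P := by tauto
      simp [hk, h1, h2]
  · have h3 : ¬ (n ≤ P ∧ m ≤ P) := by
      rintro ⟨h1, h2⟩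
      exact hk ((Nat.mul_le_mul h1 h2).trans hPk)
    simp [hk, h3]

theorem C_bound (d : ℕ) [NeZero d] (hd : 2 ≤ d) (α : ℕ → ℝ) (hmono : ∀ m, 1 ≤ m → α m ≤ α (m + 1))
    (h0 : 0 ≤ α 1) (L : ℝ) (hL : 0 ≤ L) (N : ℕ) (hαL : ∀ m, 1 ≤ m → m ≤ N → α m ≤ L)
    (k : ℕ) (T J : ℕ) (hT : N < 2 ^ T) (hJ : d < 2 ^ J)
    (S : Finset (DirichletCharacter ℂ d)) (hS : ∀ χ ∈ S, χ.IsPrimitive) :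
    ∑ χ ∈ S, ‖∑ p ∈ Finset.Icc 1 N ×ˢ Finset.Icc 1 N with p.1 * p.2 ≤ k,
        ((α p.1 : ℂ) * χ (p.1 : ZMod d)) * ((α p.2 : ℂ) * χ (p.2 : ZMod d))‖ ^ 2
      ≤ 1120 * ((T * J) ^ 2 * (1 + T) * (1 + J)) * L ^ 4 * k * d := by
  obtain ⟨P, hP⟩ : ∃ P, P = min (Nat.sqrt k) N := ⟨_, rfl⟩
  have hPN : P ≤ N := by rw [hP]; exact min_le_right _ _
  have hPk : P * P ≤ k := by
    have h1 : P ≤ Nat.sqrt k := by rw [hP]; exact min_le_left _ _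
    exact (Nat.mul_le_mul h1 h1).trans (Nat.sqrt_le k)
  have b1 := U_bound d hd α hmono h0 L hL N hαL k P (by rw [pow_two]; exact hPk) hPN
    (fun n => min N (k / n))
    (fun n _ _ => (Nat.mul_le_mul_right n (min_le_right _ _)).trans (Nat.div_mul_le_self k n))
    (fun n => min_le_left _ _) T J hT hJ S hS
  have b2 := U_bound d hd α hmono h0 L hL N hαL k P (by rw [pow_two]; exact hPk) hPN
    (fun n => P) (fun n _ h => (Nat.mul_le_mul_left P h).trans hPk)
    (fun n => hPN) T J hT hJ S hS
  have key : ∀ χ ∈ S, ‖∑ p ∈ Finset.Icc 1 N ×ˢ Finset.Icc 1 N with p.1 * p.2 ≤ k,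
        ((α p.1 : ℂ) * χ (p.1 : ZMod d)) * ((α p.2 : ℂ) * χ (p.2 : ZMod d))‖ ^ 2 ≤
        8 * ‖∑ n ∈ Finset.Icc 1 P, ∑ m ∈ Finset.Icc 1 (min N (k / n)),
          ((α n : ℂ) * χ (n : ZMod d)) * ((α m : ℂ) * χ (m : ZMod d))‖ ^ 2 +
        2 * ‖∑ n ∈ Finset.Icc 1 P, ∑ m ∈ Finset.Icc 1 P,
          ((α n : ℂ) * χ (n : ZMod d)) * ((α m : ℂ) * χ (m : ZMod d))‖ ^ 2 := by
    intro χ _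
    rw [hyperbola (fun n => (α n : ℂ) * χ (n : ZMod d)) N k P hP]
    generalize (∑ n ∈ Finset.Icc 1 P, ∑ m ∈ Finset.Icc 1 (min N (k / n)),
          ((α n : ℂ) * χ (n : ZMod d)) * ((α m : ℂ) * χ (m : ZMod d))) = A
    generalize (∑ n ∈ Finset.Icc 1 P, ∑ m ∈ Finset.Icc 1 P,
          ((α n : ℂ) * χ (n : ZMod d)) * ((α m : ℂ) * χ (m : ZMod d))) = B
    have h1 : ‖2 * A - B‖ ≤ 2 * ‖A‖ + ‖B‖ := by
      refine (norm_sub_le _ _).trans ?_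
      rw [norm_mul, Complex.norm_two]
    nlinarith [norm_nonneg (2 * A - B), sq_nonneg (2 * ‖A‖ - ‖B‖), norm_nonneg A, norm_nonneg B]
  refine (Finset.sum_le_sum key).trans ?_
  rw [Finset.sum_add_distrib, ← Finset.mul_sum, ← Finset.mul_sum]
  linarith

theorem log_size (Y : ℝ) (M : ℕ) (hM : 2 ≤ M) (hY : 4 ≤ Y) (hMY : (M : ℝ) ≤ Y) :
    1 ≤ Real.log Y ∧ ((Nat.log 2 M + 1 : ℕ) : ℝ) ≤ 3 * Real.log Y := by
  have hl2 := Real.log_two_gt_d9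
  have h4 : Real.log 4 = 2 * Real.log 2 := by
    rw [show (4 : ℝ) = 2 ^ 2 by norm_num, Real.log_pow]; norm_num
  have h1 : Real.log 4 ≤ Real.log Y := Real.log_le_log (by norm_num) hY
  refine ⟨by linarith, ?_⟩
  have h2 : ((Nat.log 2 M : ℕ) : ℝ) * Real.log 2 ≤ Real.log Y := by
    rw [← Real.log_pow]
    refine Real.log_le_log (by positivity) (le_trans ?_ hMY)
    exact_mod_cast Nat.pow_log_le_self 2 (by omega)
  push_cast
  have h3 : (0 : ℝ) ≤ (Nat.log 2 M : ℝ) := by positivity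
  nlinarith


theorem sumPrimitive_eq (d : ℕ) [NeZero d] : ∃ S : Finset (DirichletCharacter ℂ d),
    (∀ χ ∈ S, χ.IsPrimitive) ∧ ∀ f : DirichletCharacter ℂ d → ℝ, sumPrimitive d f = ∑ χ ∈ S, f χ := by
  have hfin : ({χ : DirichletCharacter ℂ d | χ.IsPrimitive}).Finite := Set.toFinite _
  refine ⟨hfin.toFinset, fun χ hχ => by simpa using hχ, fun f => ?_⟩
  unfold sumPrimitive
  rw [finsum_mem_eq_finite_toFinset_sum _ hfin]

theorem poly_sq (f : ℕ → ℂ) (N : ℕ) (s : ℂ) :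
    (∑ n ∈ Finset.Icc 1 N, f n * (n : ℂ) ^ s) ^ 2 =
      ∑ p ∈ Finset.Icc 1 N ×ˢ Finset.Icc 1 N, (f p.1 * f p.2) * ((p.1 * p.2 : ℕ) : ℂ) ^ s := by
  rw [pow_two, Finset.sum_mul_sum, Finset.sum_product]
  refine Finset.sum_congr rfl fun n _ => Finset.sum_congr rfl fun m _ => ?_
  simp only
  rw [Nat.cast_mul, Complex.natCast_mul_natCast_cpow]
  ring

theorem weighted_sum_bound (K : ℕ) (hK : 1 ≤ K) :
    ∑ k ∈ Finset.Icc 1 K, (k : ℝ) * (1 / ((k : ℝ) * (k + 1))) + (K : ℝ) * (1 / ((K : ℝ) + 1)) ≤ 2 + Real.log K := by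
  have h1 := harmonic_le_one_add_log K
  rw [harmonic_eq_sum_Icc] at h1
  push_cast at h1
  have h2 : ∑ k ∈ Finset.Icc 1 K, (k : ℝ) * (1 / ((k : ℝ) * (k + 1))) ≤ ∑ k ∈ Finset.Icc 1 K, ((k : ℝ))⁻¹ := by
    refine Finset.sum_le_sum fun k hk => ?_
    rw [Finset.mem_Icc] at hk
    have : (0 : ℝ) < k := by exact_mod_cast hk.1
    have e : (k : ℝ) * (1 / ((k : ℝ) * (k + 1))) = ((k : ℝ) + 1)⁻¹ := by field_simp
    rw [e]
    gcongr
    linarith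
  have h3 : (K : ℝ) * (1 / ((K : ℝ) + 1)) ≤ 1 := by
    rw [mul_one_div, div_le_one (by positivity)]; linarith
  linarith

theorem moment_alpha (d : ℕ) (hd : 2 ≤ d) (X : ℝ) (hX : 2 ≤ X) (α : ℕ → ℝ)
    (hmono : ∀ m, 1 ≤ m → α m ≤ α (m + 1)) (h0 : 0 ≤ α 1)
    (hα : ∀ m, 1 ≤ m → m ≤ ⌊X⌋₊ → α m ≤ Real.log (d * X)) :
    (∫ t : ℝ, sumPrimitive d (fun χ =>
          ‖∑ n ∈ Finset.Icc 1 ⌊X⌋₊,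
            (α n : ℂ) * χ (n : ZMod d) * (n : ℂ) ^ (-(1 / 2 : ℂ) - Complex.I * t)‖ ^ 4) / (t ^ 2 + 1))
        ≤ (2 * π * 1120 * 1296 * 4) * d * Real.log (d * X) ^ 13 := by
  have : NeZero d := ⟨by omega⟩
  obtain ⟨S, hS, hsum⟩ := sumPrimitive_eq d
  set N := ⌊X⌋₊ with hN
  have hN2 : 2 ≤ N := Nat.le_floor (by exact_mod_cast hX)
  have hNX : (N : ℝ) ≤ X := Nat.floor_le (by linarith)
  set L := Real.log (d * X) with hLdef
  have hd2 : (2 : ℝ) ≤ d := by exact_mod_cast hd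
  have hY4 : (4 : ℝ) ≤ d * X := by nlinarith
  obtain ⟨hL1, hTb⟩ := log_size (d * X) N hN2 hY4 (by nlinarith)
  obtain ⟨-, hJb⟩ := log_size (d * X) d hd hY4 (by nlinarith)
  rw [← hLdef] at hL1 hTb hJb
  obtain ⟨T, hT⟩ : ∃ T, T = Nat.log 2 N + 1 := ⟨_, rfl⟩
  obtain ⟨J, hJ⟩ : ∃ J, J = Nat.log 2 d + 1 := ⟨_, rfl⟩
  rw [← hT] at hTb
  rw [← hJ] at hJb
  have hT' : N < 2 ^ T := by rw [hT]; exact Nat.lt_pow_succ_log_self (by norm_num) N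
  have hJ' : d < 2 ^ J := by rw [hJ]; exact Nat.lt_pow_succ_log_self (by norm_num) d
  have hL0 : 0 ≤ L := by linarith
  -- bound for the partial sums
  have hC : ∀ k : ℕ, ∑ χ ∈ S, ‖∑ p ∈ Finset.Icc 1 N ×ˢ Finset.Icc 1 N with p.1 * p.2 ≤ k,
        ((α p.1 : ℂ) * χ (p.1 : ZMod d)) * ((α p.2 : ℂ) * χ (p.2 : ZMod d))‖ ^ 2
      ≤ 1120 * 1296 * L ^ 10 * d * k := by
    intro k
    refine (C_bound d hd α hmono h0 L hL0 N hα k T J hT' hJ' S hS).trans ?_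
    have h1 : ((T : ℝ) * J) ^ 2 * (1 + T) * (1 + J) ≤ ((3 * L) * (3 * L)) ^ 2 * (4 * L) * (4 * L) := by
      gcongr <;> linarith
    calc _ ≤ 1120 * (((3 * L) * (3 * L)) ^ 2 * (4 * L) * (4 * L)) * L ^ 4 * k * d := by gcongr
      _ = _ := by ring
  set Q : DirichletCharacter ℂ d → ℝ → ℂ := fun χ t =>
    ∑ p ∈ Finset.Icc 1 N ×ˢ Finset.Icc 1 N,
      (((α p.1 : ℂ) * χ (p.1 : ZMod d)) * ((α p.2 : ℂ) * χ (p.2 : ZMod d))) *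
        ((p.1 * p.2 : ℕ) : ℂ) ^ (-(1 / 2 : ℂ) - Complex.I * t) with hQ
  have hm : ∀ p ∈ Finset.Icc 1 N ×ˢ Finset.Icc 1 N, 1 ≤ p.1 * p.2 ∧ p.1 * p.2 ≤ N ^ 2 := by
    intro p hp
    simp only [Finset.mem_product, Finset.mem_Icc] at hp
    refine ⟨Nat.mul_pos hp.1.1 hp.2.1, ?_⟩
    rw [pow_two]
    exact Nat.mul_le_mul hp.1.2 hp.2.2
  have hpl := fun χ : DirichletCharacter ℂ d => mellin_plancherel (Finset.Icc 1 N ×ˢ Finset.Icc 1 N)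
    (fun p => ((α p.1 : ℂ) * χ (p.1 : ZMod d)) * ((α p.2 : ℂ) * χ (p.2 : ZMod d)))
    (fun p => p.1 * p.2) (N ^ 2) hm
  have hK1 : 1 ≤ N ^ 2 := Nat.one_le_pow _ _ (by omega)
  have hlogK : Real.log ((N ^ 2 : ℕ) : ℝ) ≤ 2 * L := by
    push_cast
    rw [Real.log_pow]
    have : Real.log N ≤ L := Real.log_le_log (by positivity) (by nlinarith)
    push_cast
    linarith
  have hintegrable : Integrable (fun t : ℝ => ∑ χ ∈ S, ‖Q χ t‖ ^ 2 * (1 / 4 + t ^ 2)⁻¹) :=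
    integrable_finsetSum _ fun χ _ => (hpl χ).1
  have step1 : (∫ t : ℝ, sumPrimitive d (fun χ =>
          ‖∑ n ∈ Finset.Icc 1 N,
            (α n : ℂ) * χ (n : ZMod d) * (n : ℂ) ^ (-(1 / 2 : ℂ) - Complex.I * t)‖ ^ 4) / (t ^ 2 + 1))
        ≤ ∫ t : ℝ, ∑ χ ∈ S, ‖Q χ t‖ ^ 2 * (1 / 4 + t ^ 2)⁻¹ := by
    refine integral_mono_of_nonneg (Filter.Eventually.of_forall fun t => ?_) hintegrable
      (Filter.Eventually.of_forall fun t => ?_)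
    · simp only [hsum, Pi.zero_apply]
      positivity
    · simp only [hsum]
      rw [← Finset.sum_mul, div_eq_mul_inv]
      have e : ∀ χ ∈ S, ‖∑ n ∈ Finset.Icc 1 N,
            (α n : ℂ) * χ (n : ZMod d) * (n : ℂ) ^ (-(1 / 2 : ℂ) - Complex.I * t)‖ ^ 4 = ‖Q χ t‖ ^ 2 := by
        intro χ _
        simp only [hQ]
        rw [← poly_sq (fun n => (α n : ℂ) * χ (n : ZMod d)), norm_pow, ← pow_mul]
      rw [Finset.sum_congr rfl e]
      gcongr ?_ * ?_
      exact inv_anti₀ (by positivity) (by linarith)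
  refine step1.trans ?_
  rw [integral_finsetSum _ fun χ _ => (hpl χ).1, Finset.sum_congr rfl fun χ _ => (hpl χ).2,
    ← Finset.mul_sum, Finset.sum_add_distrib, Finset.sum_comm, ← Finset.sum_mul]
  have hfull : ∀ χ : DirichletCharacter ℂ d, ∑ p ∈ Finset.Icc 1 N ×ˢ Finset.Icc 1 N,
      ((α p.1 : ℂ) * χ (p.1 : ZMod d)) * ((α p.2 : ℂ) * χ (p.2 : ZMod d)) =
      ∑ p ∈ Finset.Icc 1 N ×ˢ Finset.Icc 1 N with p.1 * p.2 ≤ N ^ 2,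
      ((α p.1 : ℂ) * χ (p.1 : ZMod d)) * ((α p.2 : ℂ) * χ (p.2 : ZMod d)) := by
    intro χ
    rw [Finset.filter_true_of_mem fun p hp => (hm p hp).2]
  have hA : ∑ k ∈ Finset.Icc 1 (N ^ 2), ∑ χ ∈ S, ‖∑ p ∈ Finset.Icc 1 N ×ˢ Finset.Icc 1 N with p.1 * p.2 ≤ k,
        ((α p.1 : ℂ) * χ (p.1 : ZMod d)) * ((α p.2 : ℂ) * χ (p.2 : ZMod d))‖ ^ 2 * (1 / ((k : ℝ) * (k + 1)))
      ≤ (1120 * 1296 * L ^ 10 * d) * ∑ k ∈ Finset.Icc 1 (N ^ 2), (k : ℝ) * (1 / ((k : ℝ) * (k + 1))) := by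
    rw [Finset.mul_sum]
    refine Finset.sum_le_sum fun k _ => ?_
    rw [← Finset.sum_mul, ← mul_assoc]
    exact mul_le_mul_of_nonneg_right (hC k) (by positivity)
  have hB : (∑ χ ∈ S, ‖∑ p ∈ Finset.Icc 1 N ×ˢ Finset.Icc 1 N,
        ((α p.1 : ℂ) * χ (p.1 : ZMod d)) * ((α p.2 : ℂ) * χ (p.2 : ZMod d))‖ ^ 2) * (1 / (((N ^ 2 : ℕ) : ℝ) + 1))
      ≤ (1120 * 1296 * L ^ 10 * d) * (((N ^ 2 : ℕ) : ℝ) * (1 / (((N ^ 2 : ℕ) : ℝ) + 1))) := by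
    rw [← mul_assoc, Finset.sum_congr rfl fun χ _ => by rw [hfull χ]]
    exact mul_le_mul_of_nonneg_right (hC _) (by positivity)
  have hW := weighted_sum_bound (N ^ 2) hK1
  have hc : 0 ≤ 1120 * 1296 * L ^ 10 * (d : ℝ) := by positivity
  have hfin : (1120 * 1296 * L ^ 10 * (d : ℝ)) * (2 + Real.log ((N ^ 2 : ℕ) : ℝ)) ≤ 1120 * 1296 * 4 * d * L ^ 13 := by
    have h1 : (2 + Real.log ((N ^ 2 : ℕ) : ℝ)) ≤ 4 * L ^ 3 := by
      have : L ≤ L ^ 3 := le_self_pow₀ hL1 (by norm_num)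
      linarith
    calc _ ≤ (1120 * 1296 * L ^ 10 * (d : ℝ)) * (4 * L ^ 3) := mul_le_mul_of_nonneg_left h1 hc
      _ = _ := by ring
  have hmul := mul_le_mul_of_nonneg_left hW hc
  rw [mul_add] at hmul
  have htot := (add_le_add hA hB).trans (hmul.trans hfin)
  calc _ ≤ 2 * π * (1120 * 1296 * 4 * d * L ^ 13) := mul_le_mul_of_nonneg_left htot (by positivity)
    _ = _ := by ring

/-- Fourth moment bound for the Dirichlet polynomials with coefficients `log n` or `1`:
`∫_ℝ Σ*_{χ mod d} |Σ_{n ≤ X} a(n) χ(n) n^{-1/2-it}|⁴ dt/(t²+1) ≤ C d (log dX)^{13}`. -/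
theorem fourth_moment_log_coeffs :
    ∃ C : ℝ, ∀ d : ℕ, 2 ≤ d → ∀ X : ℝ, 2 ≤ X → ∀ a : ℕ → ℂ,
      ((∀ n : ℕ, (n : ℝ) ≤ X → a n = (Real.log n : ℂ)) ∨
        (∀ n : ℕ, (n : ℝ) ≤ X → a n = 1)) →
      (∫ t : ℝ, sumPrimitive d (fun χ =>
          ‖∑ n ∈ Finset.Icc 1 ⌊X⌋₊,
            a n * χ (n : ZMod d) * (n : ℂ) ^ (-(1 / 2 : ℂ) - Complex.I * t)‖ ^ 4) / (t ^ 2 + 1))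
        ≤ C * d * Real.log (d * X) ^ 13 := by
  refine ⟨2 * π * 1120 * 1296 * 4, fun d hd X hX a ha => ?_⟩
  have hd2 : (2 : ℝ) ≤ d := by exact_mod_cast hd
  have hred : ∀ α : ℕ → ℝ, (∀ n : ℕ, (n : ℝ) ≤ X → a n = (α n : ℂ)) →
      (∀ m, 1 ≤ m → α m ≤ α (m + 1)) → 0 ≤ α 1 →
      (∀ m, 1 ≤ m → m ≤ ⌊X⌋₊ → α m ≤ Real.log (d * X)) →
      (∫ t : ℝ, sumPrimitive d (fun χ =>
          ‖∑ n ∈ Finset.Icc 1 ⌊X⌋₊,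
            a n * χ (n : ZMod d) * (n : ℂ) ^ (-(1 / 2 : ℂ) - Complex.I * t)‖ ^ 4) / (t ^ 2 + 1))
        ≤ (2 * π * 1120 * 1296 * 4) * d * Real.log (d * X) ^ 13 := by
    intro α h1 h2 h3 h4
    have e : ∀ (χ : DirichletCharacter ℂ d) (t : ℝ), ∑ n ∈ Finset.Icc 1 ⌊X⌋₊,
            a n * χ (n : ZMod d) * (n : ℂ) ^ (-(1 / 2 : ℂ) - Complex.I * t) =
          ∑ n ∈ Finset.Icc 1 ⌊X⌋₊,
            (α n : ℂ) * χ (n : ZMod d) * (n : ℂ) ^ (-(1 / 2 : ℂ) - Complex.I * t) := by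
      intro χ t
      refine Finset.sum_congr rfl fun n hn => ?_
      rw [Finset.mem_Icc] at hn
      rw [h1 n ((Nat.le_floor_iff (by linarith)).mp hn.2)]
    simp only [e]
    exact moment_alpha d hd X hX α h2 h3 h4
  rcases ha with ha | ha
  · refine hred (fun n => Real.log n) ha ?_ ?_ ?_
    · intro m hm
      have : (0 : ℝ) < m := by exact_mod_cast hm
      refine Real.log_le_log this ?_
      push_cast
      linarith
    · simp
    · intro m hm hm2
      have h5 : (0 : ℝ) < m := by exact_mod_cast hm
      have h6 : (m : ℝ) ≤ X := (Nat.le_floor_iff (by linarith)).mp hm2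
      exact Real.log_le_log h5 (by nlinarith)
  · refine hred (fun _ => 1) (fun n hn => by rw [ha n hn]; simp) (fun _ _ => le_rfl) zero_le_one ?_
    intro m _ _
    exact (log_size (d * X) d hd (by nlinarith) (by nlinarith)).1
end
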